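/- arXiv:1404.1598 — 2 statements merged into one kernel-verified Lean document; each statement's English description precedes it below -/
import Mathlib

section
/- Suppose |S(X,P)| ≥ 3. Then the rank of T(X,P) equals max{2, 2p+q+g(t)} + C(p+q,2) + 2p + q + g'(t) − 1 + l + h(p,q,t). -/
open Function Set

/-- The monoid (as a subset of `Function.End X`) of all transformations preserving
the partition induced by the equivalence relation `r`. -/
def TSet {X : Type*} (r : Setoid X) : Set (Function.End X) :=
  {f | ∀ x y : X, r x y → r (f x) (f y)}

/-- The group of units of `TSet r` (i.e. `S(X,P)`): the permutations `g` of `X` with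
`x ∼ y ↔ g x ∼ g y`. -/
def SXP {X : Type*} (r : Setoid X) : Set (Function.End X) :=
  {f | Function.Bijective f ∧ ∀ x y : X, r (f x) (f y) ↔ r x y}

/-- The submonoid (as a subset) of transformations preserving the partition whose
image meets every block of the partition. -/
def SigmaSet {X : Type*} (r : Setoid X) : Set (Function.End X) :=
  {f | f ∈ TSet r ∧ ∀ B ∈ Setoid.classes r, (Set.range f ∩ B).Nonempty}

/-- The number of blocks of the partition having size `s`. -/
noncomputable def blockCount {X : Type*} (r : Setoid X) (s : ℕ) : ℕ :=
  {B | B ∈ Setoid.classes r ∧ B.ncard = s}.ncard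

/-- The rank of a (sub)monoid, given as the subset `A` of a monoid `M`:
the least cardinality of a subset whose generated submonoid is `A`. -/
noncomputable def setRank {M : Type*} [Monoid M] (A : Set M) : ℕ :=
  sInf {k | ∃ S : Set M, S.Finite ∧ S.ncard = k ∧ (Submonoid.closure S : Set M) = A}

/-- `g(0) = g(1) = 0` and `g(t) = 1` for `t ≥ 2`. -/
def gg (t : ℕ) : ℕ := if 2 ≤ t then 1 else 0

/-- `g'(0) = 0` and `g'(t) = 1` for `t ≥ 1`. -/
def gg' (t : ℕ) : ℕ := if 1 ≤ t then 1 else 0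

/-- `h(p,q,0) = 0`, `h(p,q,1) = p + q`, and `h(p,q,t) = p + q + 1` for `t ≥ 2`. -/
def hh (p q t : ℕ) : ℕ := if t = 0 then 0 else if t = 1 then p + q else p + q + 1

/-!
After the points of each block have been numbered, a size-preserving permutation of the blocks
acts on `X` by keeping positions. Then `T(X,P)` is generated by its units together with three kinds
of maps: for each pair of sizes of distinct blocks, a map merging two such blocks; for each
non-minimal size, a map exchanging a block of this size with one of the next smaller size; for each
size `a ≥ 2` such that no block has size `a - 1`, a map collapsing two points of a block of size
`a`. Conversely, in any factorization of such a map, the last factor which is not injective, or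
does not preserve the sizes of the blocks, is a non-unit of the same kind. These non-units are
pairwise distinct, so the rank is that of the group of units plus the number of kinds.

The group of units is generated by the symmetric groups inside a block of each size `≥ 2` and those
permuting the blocks of each repeated size. Signs map it onto an elementary abelian `2`-group whose
rank is the number of these symmetric groups, which bounds its rank from below. Conversely, each of
them is generated by an involution and an element of odd order. If a unit is the product of an
involution and a commuting element of odd order, then its powers contain both factors, so arranging
the symmetric groups in a cycle, and multiplying each involution by the odd element of the next
symmetric group, yields one generator for each. The commutation fails when all these groups concern
a single size, but then two generators suffice.
-/

section FiberPermutations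

variable {Y J : Type*}

/-- Permutations act on `Y` as endofunctions; this is how they are viewed inside the
full transformation monoid. -/
def permEnd : Equiv.Perm Y →* Function.End Y := MulAction.toEndHom

@[simp] lemma permEnd_apply (g : Equiv.Perm Y) (y : Y) : permEnd g y = g y := rfl

lemma permEnd_injective : Injective (permEnd : Equiv.Perm Y → Function.End Y) :=
  fun _ _ h => Equiv.ext (congrFun h)

lemma mem_closure_preimage_permEnd [Finite Y] {S : Set (Function.End Y)} {g : Equiv.Perm Y}
    (hg : permEnd g ∈ Submonoid.closure S) : g ∈ Subgroup.closure (permEnd ⁻¹' S) := by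
  suffices ∀ f ∈ Submonoid.closure S, ∀ g, permEnd g = f → g ∈ Subgroup.closure (permEnd ⁻¹' S)
    from this _ hg g rfl
  intro f hf
  induction hf using Submonoid.closure_induction with
  | mem f hf => rintro g rfl; exact Subgroup.subset_closure hf
  | one =>
    intro g hg
    rw [permEnd_injective (hg.trans (map_one permEnd).symm)]
    exact one_mem _
  | mul a b _ _ ha hb =>
    intro g hg
    have hbij : Bijective (a ∘ b) := (show ⇑g = a ∘ b from hg) ▸ g.bijective
    have hb' := Finite.injective_iff_bijective.1 hbij.1.of_comp
    have ha' := Finite.surjective_iff_bijective.1 hbij.2.of_comp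
    have : g = Equiv.ofBijective a ha' * Equiv.ofBijective b hb' := Equiv.ext (congrFun hg)
    rw [this]
    exact mul_mem (ha _ rfl) (hb _ rfl)

/-- The permutations of `Y` that preserve every fiber of `ρ`. -/
def fiberPerms (ρ : Y → J) : Subgroup (Equiv.Perm Y) where
  carrier := {g | ∀ y, ρ (g y) = ρ y}
  one_mem' _ := rfl
  mul_mem' hf hg y := (hf _).trans (hg y)
  inv_mem' {g} hg y := by simpa using (hg (g⁻¹ y)).symm

lemma swap_mem_fiberPerms [DecidableEq Y] {ρ : Y → J} {x y : Y} (h : ρ x = ρ y) :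
    Equiv.swap x y ∈ fiberPerms ρ := fun z => by
  rw [Equiv.swap_apply_def]
  split_ifs with hx hy
  · rw [hx, h]
  · rw [hy, h]
  · rfl

lemma ofSubtype_mem_fiberPerms {ρ : Y → J} {j : J} [DecidablePred fun y => ρ y = j]
    (g : Equiv.Perm {y // ρ y = j}) : Equiv.Perm.ofSubtype g ∈ fiberPerms ρ := fun y => by
  by_cases hy : ρ y = j
  · rw [Equiv.Perm.ofSubtype_apply_of_mem g hy, (g ⟨y, hy⟩).2, hy]
  · rw [Equiv.Perm.ofSubtype_apply_of_not_mem g hy]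

lemma swap_self_mem [DecidableEq Y] (H : Subgroup (Equiv.Perm Y)) (y : Y) :
    Equiv.swap y y ∈ H := by
  rw [Equiv.swap_self]; exact H.one_mem

lemma fiberPerms_le_of_swap_mem [Finite Y] [DecidableEq Y] {ρ : Y → J}
    {H : Subgroup (Equiv.Perm Y)} (h : ∀ x y, ρ x = ρ y → Equiv.swap x y ∈ H) :
    fiberPerms ρ ≤ H := by
  let S : Set (Equiv.Perm Y) := {g | g.IsSwap ∧ g ∈ H}
  intro g hg
  suffices g ∈ Subgroup.closure S from (Subgroup.closure_le H).2 (fun _ hf => hf.2) this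
  refine (mem_closure_isSwap fun _ hf => hf.1).2 ⟨Set.toFinite _, fun x => ?_⟩
  rw [← swap_mem_closure_isSwap fun _ hf => hf.1]
  obtain hx | hx := eq_or_ne (g x) x
  · rw [hx]; exact swap_self_mem _ _
  · exact Subgroup.subset_closure ⟨⟨_, _, hx, rfl⟩, h _ _ (hg x)⟩

lemma exists_mem_fiberPerms_apply_eq_and_apply_eq {ρ : Y → J} {x y x' y' : Y}
    (hxy : x ≠ y) (hxy' : x' ≠ y') (hx : ρ x = ρ x') (hy : ρ y = ρ y') :
    ∃ g ∈ fiberPerms ρ, g x = x' ∧ g y = y' := by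
  classical
  have hs := swap_mem_fiberPerms hx
  have hsy : ρ (Equiv.swap x x' y) = ρ y' := (hs y).trans hy
  have hne : Equiv.swap x x' y ≠ x' := fun h =>
    hxy ((Equiv.swap x x').injective (by rw [h, Equiv.swap_apply_left]))
  refine ⟨Equiv.swap (Equiv.swap x x' y) y' * Equiv.swap x x',
    mul_mem (swap_mem_fiberPerms hsy) hs, ?_, ?_⟩
  · rw [Equiv.Perm.mul_apply, Equiv.swap_apply_left, Equiv.swap_apply_of_ne_of_ne hne.symm hxy']
  · rw [Equiv.Perm.mul_apply, Equiv.swap_apply_left]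

lemma exists_perm_mapsTo_of_ncard_le [Finite Y] {V W : Set Y} (h : V.ncard ≤ W.ncard) :
    ∃ g : Equiv.Perm Y, MapsTo g V W := by
  classical
  obtain ⟨W', hW', hcard⟩ := Set.exists_subset_card_eq h
  obtain ⟨e⟩ := Finite.card_eq.1 (show Nat.card V = Nat.card W' from hcard.symm)
  have := Fintype.ofFinite Y
  exact ⟨Equiv.extendSubtype e, fun x hx => hW' (Equiv.extendSubtype_mem e x hx)⟩

end FiberPermutations

section Merging

variable {X Y I : Type*}

/-- The idempotent endofunction that moves `x` to `y` and fixes every other point. -/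
def merge [DecidableEq Y] (x y : Y) : Function.End Y := Function.update id x y

@[simp] lemma merge_apply_left [DecidableEq Y] (x y : Y) : merge x y x = y :=
  Function.update_self ..

lemma merge_apply_of_ne [DecidableEq Y] {x y z : Y} (h : z ≠ x) : merge x y z = z :=
  Function.update_of_ne h ..

lemma merge_apply [DecidableEq Y] (x y z : Y) : merge x y z = if z = x then y else z :=
  Function.update_apply ..

lemma merge_apply_eq_iff [DecidableEq Y] {x y z z' : Y} (h : z ≠ z') :
    merge x y z = merge x y z' ↔ s(z, z') = s(x, y) := by
  rw [merge_apply, merge_apply, Sym2.eq_iff]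
  grind

lemma injOn_merge [DecidableEq Y] (x y : Y) : InjOn (merge x y) {x}ᶜ :=
  fun z hz z' hz' h => by rwa [merge_apply_of_ne hz, merge_apply_of_ne hz'] at h

lemma permEnd_conj_merge [DecidableEq Y] (g : Equiv.Perm Y) (x y : Y) :
    permEnd g * merge x y * permEnd g⁻¹ = merge (g x) (g y) := by
  funext z
  change g (merge x y (g⁻¹ z)) = _
  by_cases hz : z = g x
  · subst hz; simp
  · have hz' : g⁻¹ z ≠ x := fun h => hz (by rw [← h]; simp)
    rw [merge_apply_of_ne hz, merge_apply_of_ne hz']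
    simp

/-- An endofunction of the subtype `p`, extended by the identity. -/
def endOfSubtype (p : Y → Prop) [DecidablePred p] : Function.End {y // p y} →* Function.End Y where
  toFun f y := if h : p y then f ⟨y, h⟩ else y
  map_one' := by
    funext y
    change dite (p y) (fun _ => y) (fun _ => y) = y
    exact dite_eq_ite.trans (ite_self y)
  map_mul' f g := by
    funext y
    change (if h : p y then (f (g ⟨y, h⟩) : Y) else y) =
      if h : p (if h : p y then (g ⟨y, h⟩ : Y) else y) then
        (f ⟨if h : p y then (g ⟨y, h⟩ : Y) else y, h⟩ : Y) else if h : p y then g ⟨y, h⟩ else y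
    by_cases hy : p y
    · simp [hy, (g ⟨y, hy⟩).2]
    · simp [hy]

lemma endOfSubtype_apply_of_mem {p : Y → Prop} [DecidablePred p] (f : Function.End {y // p y})
    {y : Y} (h : p y) : endOfSubtype p f y = f ⟨y, h⟩ := dif_pos h

lemma endOfSubtype_apply_of_notMem {p : Y → Prop} [DecidablePred p]
    (f : Function.End {y // p y}) {y : Y} (h : ¬p y) : endOfSubtype p f y = y := dif_neg h

lemma endOfSubtype_permEnd {p : Y → Prop} [DecidablePred p] (g : Equiv.Perm {y // p y}) :
    endOfSubtype p (permEnd g) = permEnd (Equiv.Perm.ofSubtype g) := by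
  funext y
  by_cases hy : p y
  · rw [endOfSubtype_apply_of_mem _ hy, permEnd_apply, permEnd_apply,
      Equiv.Perm.ofSubtype_apply_of_mem g hy]
  · rw [endOfSubtype_apply_of_notMem _ hy, permEnd_apply,
      Equiv.Perm.ofSubtype_apply_of_not_mem g hy]

lemma endOfSubtype_merge [DecidableEq Y] {p : Y → Prop} [DecidablePred p] (x y : {y // p y}) :
    endOfSubtype p (merge x y) = merge (x : Y) y := by
  funext z
  by_cases hz : p z
  · rw [endOfSubtype_apply_of_mem _ hz]
    by_cases hzx : z = x
    · subst hzx; simp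
    · rw [merge_apply_of_ne hzx, merge_apply_of_ne (fun h => hzx (congrArg Subtype.val h))]
  · rw [endOfSubtype_apply_of_notMem _ hz, merge_apply_of_ne]
    rintro rfl
    exact hz x.2

lemma periodicPts_eq_univ_of_preimage_subset [Finite I] {b : I → I}
    (h : b ⁻¹' periodicPts b ⊆ periodicPts b) : periodicPts b = univ := by
  refine Set.eq_univ_of_forall fun i => by_contra fun hi => ?_
  have hiter : ∀ k, b^[k] i ∉ periodicPts b := fun k => by
    induction k with
    | zero => exact hi
    | succ k ih => rw [iterate_succ_apply']; exact fun hk => ih (h hk)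
  obtain ⟨k, k', hlt, heq⟩ :=
    Set.finite_univ.exists_lt_map_eq_of_forall_mem (f := fun k : ℕ => b^[k] i) fun _ => mem_univ _
  refine hiter k (mk_mem_periodicPts (Nat.sub_pos_of_lt hlt) ?_)
  change b^[k' - k] (b^[k] i) = b^[k] i
  rw [← iterate_add_apply, Nat.sub_add_cancel hlt.le]
  exact heq.symm

open Classical in
/-- The endofunction that acts as `f` on the fibers of `π` over `A` and as the identity on the
other fibers. -/
noncomputable def actOver (π : X → I) (A : Set I) (f : Function.End X) : Function.End X :=
  fun x => if π x ∈ A then f x else x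

lemma actOver_apply_of_mem {π : X → I} {A : Set I} (f : Function.End X) {x : X} (h : π x ∈ A) :
    actOver π A f x = f x := if_pos h

lemma actOver_apply_of_notMem {π : X → I} {A : Set I} (f : Function.End X) {x : X}
    (h : π x ∉ A) : actOver π A f x = x := if_neg h

lemma semiconj_actOver {π : X → I} {f : Function.End X} {b : I → I} (hf : Semiconj π f b)
    (A : Set I) [∀ i, Decidable (i ∈ A)] : Semiconj π (actOver π A f) (A.piecewise b id) :=
  fun x => by
    by_cases hx : π x ∈ A
    · rw [actOver_apply_of_mem _ hx, Set.piecewise_eq_of_mem _ _ _ hx, hf x]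
    · rw [actOver_apply_of_notMem _ hx, Set.piecewise_eq_of_notMem _ _ _ hx, id]

/-- If `j` is not periodic for `b` but `b j` is, then `f` first moves the fibers over periodic
points, then the fiber over `j`, then the remaining fibers. -/
lemma eq_mul_mul_of_periodicPts {π : X → I} {f : Function.End X} {b : I → I}
    (hf : Semiconj π f b) {j : I} (hj : j ∉ periodicPts b) (hbj : b j ∈ periodicPts b) :
    f = actOver π (insert j (periodicPts b))ᶜ f * actOver π {j} f *
      actOver π (periodicPts b) f := by
  funext x
  change f x = actOver _ _ f (actOver _ _ f (actOver _ _ f x))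
  have hlast : ∀ {i}, i ∈ periodicPts b → i ∉ (insert j (periodicPts b))ᶜ :=
    fun hi h => h (Or.inr hi)
  by_cases hx : π x ∈ periodicPts b
  · have hfx : π (f x) ∈ periodicPts b := by
      rw [hf x]; exact (bijOn_periodicPts b).mapsTo hx
    rw [actOver_apply_of_mem f hx,
      actOver_apply_of_notMem (A := {j}) f fun h : π (f x) = j => hj (h ▸ hfx),
      actOver_apply_of_notMem f (hlast hfx)]
  rw [actOver_apply_of_notMem (A := periodicPts b) f hx]
  by_cases hxj : π x = j
  · have hfx : π (f x) ∈ periodicPts b := by rw [hf x, hxj]; exact hbj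
    rw [actOver_apply_of_mem (A := {j}) f hxj, actOver_apply_of_notMem f (hlast hfx)]
  · rw [actOver_apply_of_notMem (A := {j}) f hxj,
      actOver_apply_of_mem f fun h => h.elim hxj hx]

theorem mem_of_semiconj [Finite I] {π : X → I} {M : Submonoid (Function.End X)}
    (hperm : ∀ (f : Function.End X) (b : I → I), Semiconj π f b → Bijective b → f ∈ M)
    (hmove : ∀ (i j : I) (m : Function.End X), i ≠ j → (∀ x, π x ≠ i → m x = x) →
      (∀ x, π x = i → π (m x) = j) → m ∈ M)
    {f : Function.End X} {b : I → I} (hf : Semiconj π f b) : f ∈ M := by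
  classical
  induction hn : {i | b i ≠ i}.ncard using Nat.strong_induction_on generalizing f b with
  | _ n ih =>
  by_cases hall : b ⁻¹' periodicPts b ⊆ periodicPts b
  · have hinj := injective_iff_periodicPts_eq_univ.2 (periodicPts_eq_univ_of_preimage_subset hall)
    exact hperm f b hf (Finite.injective_iff_bijective.1 hinj)
  obtain ⟨j, hbj, hj⟩ := Set.not_subset.1 hall
  have hjne : b j ≠ j := fun h => hj (h ▸ hbj)
  have hbij := bijOn_periodicPts b
  rw [eq_mul_mul_of_periodicPts hf hj hbj]
  refine mul_mem (mul_mem ?_ (hmove j (b j) _ hjne.symm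
    (fun x hx => actOver_apply_of_notMem f hx) fun x hx => ?_)) ?_
  · refine ih _ ?_ (semiconj_actOver hf _) rfl
    rw [← hn]
    refine Set.ncard_lt_ncard ⟨fun i hi hbi => hi ?_, fun hsub => hsub hjne ?_⟩
    · by_cases hiA : i ∈ (insert j (periodicPts b))ᶜ
      · rw [Set.piecewise_eq_of_mem _ _ _ hiA, hbi]
      · rw [Set.piecewise_eq_of_notMem _ _ _ hiA, id]
    · exact Set.piecewise_eq_of_notMem _ _ _ fun h => h (Or.inl rfl)
  · rw [actOver_apply_of_mem f hx, hf x, hx]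
  · refine hperm _ _ (semiconj_actOver hf _) (Finite.injective_iff_bijective.1 ?_)
    refine (Set.injective_piecewise_iff _).2 ⟨hbij.injOn, injective_id.injOn, ?_⟩
    rintro i hi i' hi' rfl
    exact hi' (hbij.mapsTo hi)

theorem eq_top_of_perm_mem_of_merge_mem [Finite Y] [DecidableEq Y]
    {M : Submonoid (Function.End Y)} (hperm : ∀ g, permEnd g ∈ M)
    (hmerge : Nontrivial Y → ∃ x y, x ≠ y ∧ merge x y ∈ M) : M = ⊤ := by
  refine eq_top_iff.2 fun f _ => mem_of_semiconj (π := id) (b := f) ?_ ?_ Semiconj.id_left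
  · intro f b hf hb
    obtain rfl : f = b := funext hf
    exact hperm (Equiv.ofBijective f hb)
  · intro x y m hxy hfix hmove
    obtain ⟨x₀, y₀, hne, hmem⟩ := hmerge ⟨x, y, hxy⟩
    obtain ⟨g, -, rfl, rfl⟩ := exists_mem_fiberPerms_apply_eq_and_apply_eq
      (ρ := fun _ : Y => ()) hne hxy rfl rfl
    have hm : m = permEnd g * merge x₀ y₀ * permEnd g⁻¹ := by
      rw [permEnd_conj_merge]
      funext z
      by_cases hz : z = g x₀
      · rw [hz, merge_apply_left]; exact hmove _ rfl
      · rw [merge_apply_of_ne hz]; exact hfix z hz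
    rw [hm]
    exact mul_mem (mul_mem (hperm g) hmem) (hperm g⁻¹)

end Merging

section OddOrder

variable {Y : Type*}

/-- The equivalence relation on `Y` whose classes are the maximal sets on which a group of
permutations induces, through transpositions, the full symmetric group. -/
def swapSetoid [DecidableEq Y] (H : Subgroup (Equiv.Perm Y)) : Setoid Y where
  r x y := Equiv.swap x y ∈ H
  iseqv := ⟨swap_self_mem H, fun h => by rwa [Equiv.swap_comm],
    fun h h' => SubmonoidClass.swap_mem_trans H h h'⟩

lemma swapSetoid_apply_apply [DecidableEq Y] {H : Subgroup (Equiv.Perm Y)} {g : Equiv.Perm Y}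
    (hg : g ∈ H) {x y : Y} (h : swapSetoid H x y) : swapSetoid H (g x) (g y) := by
  change Equiv.swap _ _ ∈ H
  rw [Equiv.swap_apply_apply]
  exact mul_mem (mul_mem hg h) (inv_mem hg)

lemma exists_isCycleOn_odd_orderOf [Finite Y] {s : Finset Y} (hs : Odd s.card) :
    ∃ γ : Equiv.Perm Y, γ.IsCycleOn s ∧ Odd (orderOf γ) ∧ ∀ x ∉ s, γ x = x := by
  classical
  have := Fintype.ofFinite Y
  obtain ⟨γ, hcycle, hfix⟩ := s.exists_cycleOn
  have hfix' : ∀ x ∉ s, γ x = x := fun x hx => by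
    by_contra h
    exact hx (hfix (Equiv.Perm.mem_support.2 h))
  refine ⟨γ, hcycle, hs.of_dvd_nat (orderOf_dvd_of_pow_eq_one (Equiv.ext fun x => ?_)), hfix'⟩
  by_cases hx : x ∈ s
  · exact hcycle.pow_card_apply hx
  · exact Equiv.Perm.pow_apply_eq_self_of_apply_eq_self (hfix' x hx) _

lemma exists_mem_fiberPerms_isCycleOn {J : Type*} [Finite Y] (ρ : Y → J) (j : J) :
    ∃ g ∈ fiberPerms ρ, g.IsCycleOn {y | ρ y = j} := by
  classical
  have := Fintype.ofFinite Y
  obtain ⟨g, hcycle, hsupport⟩ := Finset.exists_cycleOn (Finset.univ.filter fun y => ρ y = j)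
  rw [Finset.coe_filter_univ] at hcycle
  refine ⟨g, fun y => ?_, hcycle⟩
  by_cases hy : g y = y
  · rw [hy]
  · have hρ : ρ y = j := (Finset.mem_filter.1 (hsupport (Equiv.Perm.mem_support.2 hy))).2
    exact (hcycle.apply_mem_iff.2 hρ).trans hρ.symm

/-- A transposition `swap x₀ x₁` and a permutation `γ` of odd order generate the symmetric group:
take for `γ` a cycle through all the points or through all of them but `x₀`. -/
lemma exists_odd_orderOf_forall_setoid_eq_top (Y : Type*) [Finite Y] [Nonempty Y] :
    ∃ (x₀ x₁ : Y) (γ : Equiv.Perm Y), Odd (orderOf γ) ∧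
      ∀ R : Setoid Y, (∀ x y, R x y → R (γ x) (γ y)) → R x₀ x₁ → R = ⊤ := by
  classical
  have := Fintype.ofFinite Y
  obtain ⟨x₀⟩ := ‹Nonempty Y›
  have hpow : ∀ (γ : Equiv.Perm Y) (R : Setoid Y), (∀ x y, R x y → R (γ x) (γ y)) →
      R x₀ (γ x₀) → ∀ (k : ℕ) (y : Y), R x₀ y → R x₀ ((γ ^ k) y) := by
    intro γ R hR h₀ k y hy
    induction k with
    | zero => exact hy
    | succ k ih => rw [pow_succ']; exact R.trans h₀ (hR _ _ ih)
  have htop : ∀ R : Setoid Y, (∀ y, R x₀ y) → R = ⊤ := fun R h =>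
    Setoid.eq_top_iff.2 fun x y => R.trans (R.symm (h x)) (h y)
  obtain heven | hodd := Nat.even_or_odd (Fintype.card Y)
  · have hpos := Fintype.card_pos_iff.2 ⟨x₀⟩
    have hs : Odd (Finset.univ.erase x₀).card := by
      rw [Finset.card_erase_of_mem (Finset.mem_univ _), Finset.card_univ]
      exact Nat.Even.sub_odd hpos heven odd_one
    obtain ⟨γ, hcycle, hγ, hfix⟩ := exists_isCycleOn_odd_orderOf hs
    obtain ⟨x₁, hx₁⟩ := Finset.card_pos.1 hs.pos
    refine ⟨x₀, x₁, γ, hγ, fun R hR h => htop R fun y => ?_⟩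
    obtain rfl | hy := eq_or_ne y x₀
    · exact R.refl _
    obtain ⟨k, -, rfl⟩ := hcycle.exists_pow_eq hx₁ (Finset.mem_erase.2 ⟨hy, Finset.mem_univ _⟩)
    exact hpow γ R hR (by rw [hfix x₀ (by simp)]) k x₁ h
  · obtain ⟨γ, hcycle, hγ, -⟩ := exists_isCycleOn_odd_orderOf (s := Finset.univ) hodd
    refine ⟨x₀, γ x₀, γ, hγ, fun R hR h => htop R fun y => ?_⟩
    obtain ⟨k, -, rfl⟩ := hcycle.exists_pow_eq (Finset.mem_univ x₀) (Finset.mem_univ y)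
    exact hpow γ R hR h k x₀ (R.refl _)

lemma mem_and_mem_of_mul_mem {G : Type*} [Group G] {H : Subgroup G} {u v : G} (h : Commute u v)
    (hu : u ^ 2 = 1) (hv : Odd (orderOf v)) (huv : u * v ∈ H) : u ∈ H ∧ v ∈ H := by
  have hmem : u ∈ H := by
    have hpow := pow_mem huv (orderOf v)
    obtain ⟨k, hk⟩ := hv
    rw [h.mul_pow, pow_orderOf_eq_one, mul_one, hk, pow_succ, pow_mul, hu, one_pow, one_mul] at hpow
    exact hpow
  exact ⟨hmem, (H.mul_mem_cancel_left hmem).1 huv⟩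

lemma forall_mem_and_mem_of_mul_mem {G Λ : Type*} [Group G] {H : Subgroup G} {u v : Λ → G}
    (θ : Equiv.Perm Λ) (h : ∀ x, Commute (u x) (v (θ x))) (hu : ∀ x, u x ^ 2 = 1)
    (hv : ∀ x, Odd (orderOf (v x))) (hH : ∀ x, u x * v (θ x) ∈ H) (x : Λ) : u x ∈ H ∧ v x ∈ H := by
  have hmem := fun y => mem_and_mem_of_mul_mem (h y) (hu y) (hv _) (hH y)
  refine ⟨(hmem x).1, ?_⟩
  simpa using (hmem (θ.symm x)).2

lemma exists_perm_lt_or_forall_le {α β : Type*} [Finite α] [LinearOrder β] {f : α → β}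
    (hf : Injective f) :
    ∃ θ : Equiv.Perm α, ∀ x, f x < f (θ x) ∨ ∀ y, f (θ x) ≤ f y ∧ f y ≤ f x := by
  let := LinearOrder.lift' f hf
  have := Fintype.ofFinite α
  obtain hempty | hne := isEmpty_or_nonempty α
  · exact ⟨1, isEmptyElim⟩
  obtain ⟨n, hn⟩ := Nat.exists_eq_add_one_of_ne_zero (Fintype.card_ne_zero (α := α))
  let e : Fin (n + 1) ≃o α := Fintype.orderIsoFinOfCardEq α hn
  refine ⟨e.toEquiv.permCongr (finRotate (n + 1)), fun x => ?_⟩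
  obtain ⟨i, rfl⟩ := e.surjective x
  have hθ : e.toEquiv.permCongr (finRotate (n + 1)) (e i) = e (finRotate (n + 1) i) := by simp
  rw [hθ]
  obtain rfl | hi := eq_or_ne i (Fin.last n)
  · refine Or.inr fun y => ?_
    obtain ⟨j, rfl⟩ := e.surjective y
    rw [finRotate_last]
    exact ⟨e.monotone j.zero_le, e.monotone j.le_last⟩
  · refine Or.inl (e.strictMono ?_)
    rw [Fin.lt_def, coe_finRotate_of_ne_last hi]
    exact Nat.lt_succ_self _

end OddOrder

section Signs

variable {Y J : Type*} [Fintype Y] [DecidableEq Y] [DecidableEq J]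

/-- The sign of the permutation of the fiber of `ρ` over `j` induced by an element of
`fiberPerms ρ`. -/
def fiberSign (ρ : Y → J) (j : J) : fiberPerms ρ →* ℤˣ where
  toFun g := Equiv.Perm.sign
    ((g : Equiv.Perm Y).subtypePerm (p := (ρ · = j)) fun y => by rw [g.2 y])
  map_one' := Equiv.Perm.sign_one
  map_mul' _ _ := by
    rw [← Equiv.Perm.sign_mul]
    rfl

lemma fiberSign_eq_one {ρ : Y → J} {j : J} {g : fiberPerms ρ}
    (h : ∀ y, ρ y = j → (g : Equiv.Perm Y) y = y) : fiberSign ρ j g = 1 := by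
  have : (g : Equiv.Perm Y).subtypePerm (p := (ρ · = j)) (fun y => by rw [g.2 y]) = 1 :=
    Equiv.ext fun y => Subtype.ext (h y y.2)
  exact (congrArg Equiv.Perm.sign this).trans Equiv.Perm.sign_one

lemma fiberSign_swap {ρ : Y → J} {x y : Y} (hxy : x ≠ y) (h : ρ x = ρ y) (j : J) :
    fiberSign ρ j ⟨_, swap_mem_fiberPerms h⟩ = if j = ρ x then -1 else 1 := by
  split_ifs with hj
  · subst hj
    have := Equiv.Perm.sign_subtypePerm (Equiv.swap x y) (p := (ρ · = ρ x))
      (fun z => by rw [swap_mem_fiberPerms h z]) fun z hz => by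
        obtain rfl | rfl := (Equiv.swap_apply_ne_self_iff.1 hz).2
        exacts [rfl, h.symm]
    exact this.trans (Equiv.Perm.sign_swap hxy)
  · exact fiberSign_eq_one fun z hz => Equiv.swap_apply_of_ne_of_ne
      (by rintro rfl; exact hj hz.symm) (by rintro rfl; exact hj (hz.symm.trans h.symm))

end Signs

section Factorization

lemma exists_factor_notMem {M : Type*} [Monoid M] {S : Set M} (N : Submonoid M) {w : M}
    (hw : w ∈ Submonoid.closure S) (hwN : w ∉ N) :
    ∃ e ∈ S, e ∉ N ∧ ∃ v ∈ Submonoid.closure S, ∃ g ∈ Submonoid.closure S, g ∈ N ∧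
      w = v * (e * g) := by
  induction hw using Submonoid.closure_induction_left with
  | one => exact absurd N.one_mem hwN
  | mul_left s hs y hy ih =>
    by_cases hyN : y ∈ N
    · exact ⟨s, hs, fun h => hwN (N.mul_mem h hyN), 1, one_mem _, y, hy, hyN, (one_mul _).symm⟩
    · obtain ⟨e, he, heN, v, hv, g, hg, hgN, rfl⟩ := ih hyN
      exact ⟨e, he, heN, s * v, mul_mem (Submonoid.subset_closure hs) hv, g, hg, hgN,
        (mul_assoc ..).symm⟩

lemma apply_eq_of_injective_of_le {I : Type*} [Finite I] {ρ : I → ℕ} {b : I → I} (hb : Injective b)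
    (h : ∀ i, ρ i ≤ ρ (b i)) (i : I) : ρ (b i) = ρ i := by
  have := Fintype.ofFinite I
  have hsum : ∑ i, ρ (b i) = ∑ i, ρ i :=
    (Equiv.ofBijective b (Finite.injective_iff_bijective.1 hb)).sum_comp ρ
  exact ((Finset.sum_eq_sum_iff_of_le fun i _ => h i).1 hsum.symm i (Finset.mem_univ i)).symm

/-- The submonoid of injective self-maps. -/
def injectiveEnd (X : Type*) : Submonoid (Function.End X) where
  carrier := {f | Injective f}
  one_mem' := injective_id
  mul_mem' := Injective.comp

end Factorization

/-- Coordinates on a set `X` partitioned into blocks indexed by `I`: a point is determined by its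
block and its position in that block. The point of block `i` at position `a` is defined for all
`a : ℕ`, positions beyond the end of the block being sent to its last point. -/
structure BlockCoords (X I : Type*) where
  block : X → I
  size : I → ℕ
  pos : X → ℕ
  point : I → ℕ → X
  block_point : ∀ i a, block (point i a) = i
  pos_point : ∀ i a, pos (point i a) = min a (size i - 1)
  pos_lt : ∀ x, pos x < size (block x)
  point_block_pos : ∀ x, point (block x) (pos x) = x

namespace BlockCoords

attribute [simp] block_point point_block_pos

section Lifting

variable {X I : Type*} (c : BlockCoords X I)

lemma size_pos (i : I) : 0 < c.size i := by
  simpa using (Nat.zero_le _).trans_lt (c.pos_lt (c.point i 0))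

lemma pos_point_of_lt {i : I} {a : ℕ} (h : a < c.size i) : c.pos (c.point i a) = a := by
  rw [c.pos_point]; omega

lemma eq_of_block_eq_of_pos_eq {x y : X} (hb : c.block x = c.block y) (hp : c.pos x = c.pos y) :
    x = y := by
  rw [← c.point_block_pos x, ← c.point_block_pos y, hb, hp]

lemma point_pos {x : X} {i : I} (h : c.block x = i) : c.point i (c.pos x) = x := by
  subst h; exact c.point_block_pos x

/-- The monoid of transformations preserving the partition into blocks, `T(X,P)`. -/
def transformations : Submonoid (Function.End X) where
  carrier := {f | ∀ x y, c.block x = c.block y → c.block (f x) = c.block (f y)}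
  one_mem' _ _ h := h
  mul_mem' hf hg x y h := hf _ _ (hg x y h)

/-- The map induced on the set of blocks by a transformation of `X`. -/
def blockMap (f : Function.End X) : I → I := fun i => c.block (f (c.point i 0))

lemma semiconj_blockMap {f : Function.End X} (hf : f ∈ c.transformations) :
    Semiconj c.block f (c.blockMap f) := fun x => hf _ _ (by simp)

lemma blockMap_eq_of_semiconj {f : Function.End X} {b : I → I} (h : Semiconj c.block f b) :
    c.blockMap f = b := funext fun i => by simp [blockMap, h.eq]

lemma mem_transformations_of_semiconj {f : Function.End X} {b : I → I}
    (h : Semiconj c.block f b) : f ∈ c.transformations := fun x y hxy => by rw [h.eq, h.eq, hxy]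

lemma blockMap_mul {f g : Function.End X} (hf : f ∈ c.transformations)
    (hg : g ∈ c.transformations) : c.blockMap (f * g) = c.blockMap f ∘ c.blockMap g :=
  c.blockMap_eq_of_semiconj ((c.semiconj_blockMap hf).comp_right (c.semiconj_blockMap hg))

/-- The transformation of `X` that moves blocks according to `σ` and keeps positions (up to
clamping, when a block is sent to a smaller one). -/
def lift (σ : Function.End I) : Function.End X := fun x => c.point (σ (c.block x)) (c.pos x)

@[simp] lemma block_lift (σ : Function.End I) (x : X) :
    c.block (c.lift σ x) = σ (c.block x) := c.block_point ..

lemma pos_lift (σ : Function.End I) (x : X) :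
    c.pos (c.lift σ x) = min (c.pos x) (c.size (σ (c.block x)) - 1) := c.pos_point ..

lemma semiconj_lift (σ : Function.End I) : Semiconj c.block (c.lift σ) σ := c.block_lift σ

lemma pos_lift_of_size_le {σ : Function.End I} {x : X}
    (h : c.size (c.block x) ≤ c.size (σ (c.block x))) : c.pos (c.lift σ x) = c.pos x := by
  have := c.pos_lt x
  rw [pos_lift]; omega

lemma lift_apply_of_fixed {σ : Function.End I} {x : X} (h : σ (c.block x) = c.block x) :
    c.lift σ x = x :=
  c.point_pos h.symm

lemma lift_mul_lift (σ : Function.End I) {τ : Function.End I} (h : ∀ i, c.size i ≤ c.size (τ i)) :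
    c.lift σ * c.lift τ = c.lift (σ * τ) := by
  funext x
  change c.point (σ (c.block (c.lift τ x))) (c.pos (c.lift τ x)) = _
  rw [c.block_lift, c.pos_lift_of_size_le (h _)]
  rfl

/-- Lifting is multiplicative on the permutations of the set of blocks that preserve sizes. -/
def liftEnd : fiberPerms c.size →* Function.End X where
  toFun σ := c.lift (permEnd (σ : Equiv.Perm I))
  map_one' := funext fun x => c.point_block_pos x
  map_mul' σ τ := (c.lift_mul_lift (permEnd (σ : Equiv.Perm I)) fun i => (τ.2 i).ge).symm

/-- The permutation of `X` that moves blocks according to a size-preserving permutation of the set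
of blocks and keeps positions. -/
def liftPerm : fiberPerms c.size →* Equiv.Perm X := c.liftEnd.toHomPerm

lemma permEnd_liftPerm (σ : fiberPerms c.size) :
    permEnd (c.liftPerm σ) = c.lift (permEnd (σ : Equiv.Perm I)) := rfl

@[simp] lemma block_liftPerm (σ : fiberPerms c.size) (x : X) :
    c.block (c.liftPerm σ x) = (σ : Equiv.Perm I) (c.block x) := c.block_lift ..

@[simp] lemma pos_liftPerm (σ : fiberPerms c.size) (x : X) :
    c.pos (c.liftPerm σ x) = c.pos x := c.pos_lift_of_size_le (σ.2 _).ge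

lemma lift_conj (σ : fiberPerms c.size) (τ : Function.End I) :
    c.lift (permEnd (σ : Equiv.Perm I) * τ * permEnd (σ : Equiv.Perm I)⁻¹) =
      permEnd (c.liftPerm σ) * c.lift τ * permEnd (c.liftPerm σ)⁻¹ := by
  have hτ : c.lift τ * c.lift (permEnd (σ : Equiv.Perm I)⁻¹) = _ :=
    c.lift_mul_lift τ fun i => (σ⁻¹.2 i).ge
  rw [← map_inv, permEnd_liftPerm, permEnd_liftPerm, mul_assoc (c.lift _), Subgroup.coe_inv, hτ]
  funext x
  change _ = c.lift _ (c.lift _ x)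
  refine c.eq_of_block_eq_of_pos_eq ?_ ?_
  · simp only [block_lift, mul_assoc]; rfl
  · rw [c.pos_lift_of_size_le (σ := permEnd (σ : Equiv.Perm I)) (σ.2 _).ge, pos_lift, pos_lift]
    exact congrArg (fun s => min (c.pos x) (s - 1)) (σ.2 _)

/-- The group of units of `T(X,P)`, `S(X,P)`. -/
def units : Subgroup (Equiv.Perm X) where
  carrier := {g | ∀ x y, c.block (g x) = c.block (g y) ↔ c.block x = c.block y}
  one_mem' _ _ := Iff.rfl
  mul_mem' hf hg x y := (hf _ _).trans (hg x y)
  inv_mem' {g} hg x y := by simpa using (hg (g⁻¹ x) (g⁻¹ y)).symm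

lemma permEnd_mem_transformations {g : Equiv.Perm X} (hg : g ∈ c.units) :
    permEnd g ∈ c.transformations := fun x y => (hg x y).2

lemma liftPerm_mem_units (σ : fiberPerms c.size) : c.liftPerm σ ∈ c.units := fun x y => by
  simp

lemma fiberPerms_block_le_units : fiberPerms c.block ≤ c.units := fun g hg x y => by
  rw [hg x, hg y]

/-- The idempotent moving the last point of block `i` to the preceding one. -/
def collapse [DecidableEq X] (i : I) : Function.End X :=
  merge (c.point i (c.size i - 1)) (c.point i (c.size i - 2))

end Lifting

section GeneratingFromUnits

variable {X I : Type*} (c : BlockCoords X I) {M : Submonoid (Function.End X)}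

lemma lift_swap_mul_lift_swap [DecidableEq X] [DecidableEq I] {i d : I}
    (h : c.size d + 1 = c.size i) :
    c.lift (permEnd (Equiv.swap i d)) * c.lift (permEnd (Equiv.swap i d)) = c.collapse i := by
  have hdi : d ≠ i := by rintro rfl; omega
  have hd := c.size_pos d
  funext x
  have hx := c.pos_lt x
  change c.lift _ (c.lift _ x) = _
  have hblock : c.block (c.lift (permEnd (Equiv.swap i d)) (c.lift (permEnd (Equiv.swap i d)) x)) =
      c.block x := by simp
  have hpos : c.pos (c.lift (permEnd (Equiv.swap i d)) (c.lift (permEnd (Equiv.swap i d)) x)) =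
      if c.block x = i then min (c.pos x) (c.size i - 2) else c.pos x := by
    simp only [pos_lift, block_lift, permEnd_apply, Equiv.swap_apply_def]
    grind
  by_cases hlast : x = c.point i (c.size i - 1)
  · subst hlast
    rw [collapse, merge_apply_left]
    refine c.eq_of_block_eq_of_pos_eq (by simp) ?_
    rw [hpos, if_pos (c.block_point ..), pos_point, pos_point]
    omega
  · rw [collapse, merge_apply_of_ne hlast]
    refine c.eq_of_block_eq_of_pos_eq hblock (hpos.trans (ite_eq_right_iff.2 fun hi => ?_))
    have hne : c.pos x ≠ c.size i - 1 := fun h => hlast (by rw [← h, c.point_pos hi])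
    rw [hi] at hx
    omega

lemma lift_swap_mul_lift_swap_mul_lift_swap [DecidableEq I] {i e d : I}
    (hde : c.size d < c.size e) (hei : c.size e < c.size i) :
    c.lift (permEnd (Equiv.swap i e)) * c.lift (permEnd (Equiv.swap e d)) *
      c.lift (permEnd (Equiv.swap i e)) = c.lift (permEnd (Equiv.swap i d)) := by
  have hie : i ≠ e := by rintro rfl; omega
  have hed : e ≠ d := by rintro rfl; omega
  have hid : i ≠ d := by rintro rfl; omega
  funext x
  have hx := c.pos_lt x
  change c.lift _ (c.lift _ (c.lift _ x)) = _
  refine c.eq_of_block_eq_of_pos_eq ?_ ?_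
  · simp only [block_lift, permEnd_apply]
    grind
  · simp only [pos_lift, block_lift, permEnd_apply, Equiv.swap_apply_def]
    grind

lemma lift_swap_mem_of_size_eq [DecidableEq I] (hG : ∀ g ∈ c.units, permEnd g ∈ M) {i d i' d' : I}
    (hid : i ≠ d) (hid' : i' ≠ d') (hi : c.size i' = c.size i) (hd : c.size d' = c.size d)
    (h : c.lift (permEnd (Equiv.swap i' d')) ∈ M) : c.lift (permEnd (Equiv.swap i d)) ∈ M := by
  obtain ⟨σ, hσ, rfl, rfl⟩ := exists_mem_fiberPerms_apply_eq_and_apply_eq hid' hid hi hd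
  rw [Equiv.swap_apply_apply, map_mul, map_mul, c.lift_conj ⟨σ, hσ⟩]
  exact mul_mem (mul_mem (hG _ (c.liftPerm_mem_units _)) h)
    (hG _ (inv_mem (c.liftPerm_mem_units _)))

lemma lift_merge_mem_of_size_eq [DecidableEq I] (hG : ∀ g ∈ c.units, permEnd g ∈ M)
    {i d i' d' : I} (hid : i ≠ d) (hid' : i' ≠ d') (hi : c.size i' = c.size i)
    (hd : c.size d' = c.size d) (h : c.lift (merge i' d') ∈ M) : c.lift (merge i d) ∈ M := by
  obtain ⟨σ, hσ, rfl, rfl⟩ := exists_mem_fiberPerms_apply_eq_and_apply_eq hid' hid hi hd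
  rw [← permEnd_conj_merge, c.lift_conj ⟨σ, hσ⟩]
  exact mul_mem (mul_mem (hG _ (c.liftPerm_mem_units _)) h)
    (hG _ (inv_mem (c.liftPerm_mem_units _)))

lemma collapse_mem_of_size_eq [DecidableEq X] (hG : ∀ g ∈ c.units, permEnd g ∈ M) {i i' : I}
    (hi : c.size i' = c.size i) (h : c.collapse i' ∈ M) : c.collapse i ∈ M := by
  classical
  let σ : fiberPerms c.size := ⟨Equiv.swap i' i, swap_mem_fiberPerms hi⟩
  have hσ : ∀ a, c.liftPerm σ (c.point i' a) = c.point i a := fun a =>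
    c.eq_of_block_eq_of_pos_eq (by simp [σ]) (by simp [pos_point, hi])
  have hconj : c.collapse i =
      permEnd (c.liftPerm σ) * c.collapse i' * permEnd (c.liftPerm σ)⁻¹ := by
    rw [collapse, collapse, permEnd_conj_merge, hσ, hσ, hi]
  rw [hconj]
  exact mul_mem (mul_mem (hG _ (c.liftPerm_mem_units _)) h)
    (hG _ (inv_mem (c.liftPerm_mem_units _)))

lemma lift_swap_mem [DecidableEq I] (hG : ∀ g ∈ c.units, permEnd g ∈ M)
    (hswap : ∀ i d, c.size d < c.size i → (∀ j, ¬(c.size d < c.size j ∧ c.size j < c.size i)) →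
      ∃ i' d', c.size i' = c.size i ∧ c.size d' = c.size d ∧
        c.lift (permEnd (Equiv.swap i' d')) ∈ M)
    (i d : I) : c.lift (permEnd (Equiv.swap i d)) ∈ M := by
  wlog hle : c.size d ≤ c.size i generalizing i d
  · rw [Equiv.swap_comm]; exact this d i (le_of_not_ge hle)
  obtain heq | hlt := hle.eq_or_lt
  · exact hG _ (c.liftPerm_mem_units ⟨_, swap_mem_fiberPerms heq.symm⟩)
  induction hn : c.size i - c.size d using Nat.strong_induction_on generalizing i d with
  | _ n ih =>
  by_cases hcons : ∀ j, ¬(c.size d < c.size j ∧ c.size j < c.size i)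
  · obtain ⟨i', d', hi', hd', hmem⟩ := hswap i d hlt hcons
    exact c.lift_swap_mem_of_size_eq hG (by rintro rfl; omega) (by rintro rfl; omega) hi' hd' hmem
  · push Not at hcons
    obtain ⟨e, hde, hei⟩ := hcons
    have hie := ih _ (by omega) i e hei.le hei rfl
    have hed := ih _ (by omega) e d hde.le hde rfl
    rw [← c.lift_swap_mul_lift_swap_mul_lift_swap hde hei]
    exact mul_mem (mul_mem hie hed) hie

lemma collapse_mem [DecidableEq X] [DecidableEq I] (hG : ∀ g ∈ c.units, permEnd g ∈ M)
    (hcollapse : ∀ i, 2 ≤ c.size i → (∀ j, c.size j ≠ c.size i - 1) →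
      ∃ i', c.size i' = c.size i ∧ c.collapse i' ∈ M)
    (hswap : ∀ i d, c.lift (permEnd (Equiv.swap i d)) ∈ M) {i : I} (hi : 2 ≤ c.size i) :
    c.collapse i ∈ M := by
  by_cases h : ∀ j, c.size j ≠ c.size i - 1
  · obtain ⟨i', hi', hmem⟩ := hcollapse i hi h
    exact c.collapse_mem_of_size_eq hG hi' hmem
  · push Not at h
    obtain ⟨d, hd⟩ := h
    rw [← c.lift_swap_mul_lift_swap (d := d) (by omega)]
    exact mul_mem (hswap i d) (hswap i d)

lemma actOver_singleton_mem [Finite X] [DecidableEq X] (hG : ∀ g ∈ c.units, permEnd g ∈ M)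
    {i : I} (hcollapse : 2 ≤ c.size i → c.collapse i ∈ M) {f : Function.End X}
    (hf : ∀ x, c.block x = i → c.block (f x) = i) : actOver c.block {i} f ∈ M := by
  classical
  let f' : Function.End {x // c.block x = i} := fun x => ⟨f x, hf x x.2⟩
  have hf' : actOver c.block {i} f = endOfSubtype (fun x => c.block x = i) f' := by
    funext x
    by_cases hx : c.block x = i
    · rw [actOver_apply_of_mem (A := {i}) f hx, endOfSubtype_apply_of_mem f' hx]
    · rw [actOver_apply_of_notMem (A := {i}) f hx, endOfSubtype_apply_of_notMem f' hx]
  have htop : M.comap (endOfSubtype fun x => c.block x = i) = ⊤ := by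
    refine eq_top_of_perm_mem_of_merge_mem (fun g => ?_) fun ⟨x, y, hxy⟩ => ?_
    · rw [Submonoid.mem_comap, endOfSubtype_permEnd]
      exact hG _ (c.fiberPerms_block_le_units (ofSubtype_mem_fiberPerms g))
    · have hsize : 2 ≤ c.size i := by
        by_contra hlt
        have hx := c.pos_lt x
        have hy := c.pos_lt y
        rw [x.2] at hx
        rw [y.2] at hy
        exact hxy (Subtype.ext (c.eq_of_block_eq_of_pos_eq (x.2.trans y.2.symm) (by omega)))
      refine ⟨⟨_, c.block_point i (c.size i - 1)⟩, ⟨_, c.block_point i (c.size i - 2)⟩,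
        fun h => ?_, ?_⟩
      · have hpos := congrArg c.pos (Subtype.mk.inj h)
        rw [pos_point, pos_point] at hpos
        omega
      · rw [Submonoid.mem_comap, endOfSubtype_merge]
        exact hcollapse hsize
  rw [hf', ← Submonoid.mem_comap, htop]
  trivial

lemma mem_of_block_apply_eq [Finite I]
    (hlocal : ∀ (i : I) (f : Function.End X), (∀ x, c.block x = i → c.block (f x) = i) →
      actOver c.block {i} f ∈ M)
    {f : Function.End X} (hf : ∀ x, c.block (f x) = c.block x) : f ∈ M := by
  suffices h : ∀ A : Set I, actOver c.block A f ∈ M by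
    have huniv : actOver c.block univ f = f :=
      funext fun x => actOver_apply_of_mem f (mem_univ _)
    exact huniv ▸ h univ
  intro A
  induction A, A.toFinite using Set.Finite.induction_on with
  | empty =>
    have hone : actOver c.block ∅ f = 1 := funext fun x => actOver_apply_of_notMem f (by simp)
    rw [hone]
    exact one_mem M
  | @insert i A hiA _ ih =>
    have hmul : actOver c.block (insert i A) f = actOver c.block {i} f * actOver c.block A f := by
      funext x
      change _ = actOver _ _ f (actOver _ _ f x)
      by_cases hx : c.block x ∈ A
      · have hfx : c.block (f x) ∉ ({i} : Set I) := fun h => hiA ((hf x).symm.trans h ▸ hx)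
        rw [actOver_apply_of_mem f hx, actOver_apply_of_mem f (mem_insert_of_mem i hx),
          actOver_apply_of_notMem f hfx]
      · rw [actOver_apply_of_notMem f hx]
        by_cases hxi : c.block x = i
        · rw [actOver_apply_of_mem (A := insert i A) f (Or.inl hxi),
            actOver_apply_of_mem (A := {i}) f hxi]
        · rw [actOver_apply_of_notMem (A := insert i A) f fun h => h.elim hxi hx,
            actOver_apply_of_notMem (A := {i}) f hxi]
    rw [hmul]
    exact mul_mem (hlocal i f fun x hx => (hf x).trans hx) ih

/-- A transformation sending block `i` to a block `d ≠ i` which is not larger is, up to a map of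
block `i` to itself and an exchange of the two blocks, one fixing block `d` pointwise. -/
lemma exists_eq_mul_lift_swap_mul [DecidableEq I] {f : Function.End X} {b : Equiv.Perm I}
    (hf : Semiconj c.block f b) {i : I} (hbi : b i ≠ i) (hsize : c.size (b i) ≤ c.size i) :
    ∃ g u : Function.End X, Semiconj c.block g (b * Equiv.swap i (b i)) ∧
      (∀ x, c.block x = i → c.block (u x) = i) ∧
      f = g * (c.lift (permEnd (Equiv.swap i (b i))) * actOver c.block {i} u) := by
  classical
  set d := b i with hd
  let g : Function.End X := fun x =>
    if c.block x = d then x else if c.block x = i then f (c.point d (c.pos x)) else f x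
  let u : Function.End X := fun x => c.point i (c.pos (f x))
  have hblock : ∀ x, c.block (f x) = b (c.block x) := hf
  refine ⟨g, u, fun x => ?_, fun x _ => c.block_point .., funext fun x => ?_⟩
  · change c.block (if _ then x else if _ then _ else _) = _
    split_ifs with hxd hxi
    · rw [hxd]; simp [hd]
    · rw [hblock, hxi]; simp
    · rw [hblock, Equiv.Perm.mul_apply, Equiv.swap_apply_of_ne_of_ne hxi hxd]
  change f x = g (c.lift _ (actOver c.block {i} u x))
  by_cases hxi : c.block x = i
  · have hfx : c.block (f x) = d := by rw [hblock, hxi]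
    have hlift : c.lift (permEnd (Equiv.swap i d)) (u x) = f x := by
      refine c.eq_of_block_eq_of_pos_eq (by simp [u, hfx]) ?_
      have := c.pos_lt (f x)
      rw [hfx] at this
      simp only [pos_lift, u, block_point, permEnd_apply, Equiv.swap_apply_left, pos_point]
      omega
    rw [actOver_apply_of_mem (A := {i}) u hxi, hlift]
    exact (if_pos hfx).symm
  rw [actOver_apply_of_notMem (A := {i}) u hxi]
  by_cases hxd : c.block x = d
  · have hlift : c.block (c.lift (permEnd (Equiv.swap i d)) x) = i := by simp [hxd]
    have hpos : c.pos (c.lift (permEnd (Equiv.swap i d)) x) = c.pos x :=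
      c.pos_lift_of_size_le (by simpa [hxd] using hsize)
    change _ = if _ then _ else if _ then _ else _
    rw [if_neg (by rw [hlift]; exact hbi.symm), if_pos hlift, hpos, c.point_pos hxd]
  · rw [c.lift_apply_of_fixed (σ := permEnd (Equiv.swap i d))
      (Equiv.swap_apply_of_ne_of_ne hxi hxd)]
    exact ((if_neg hxd).trans (if_neg hxi)).symm

lemma mem_of_semiconj_perm [Finite I] [DecidableEq I]
    (hlocal : ∀ (i : I) (f : Function.End X), (∀ x, c.block x = i → c.block (f x) = i) →
      actOver c.block {i} f ∈ M)
    (hswap : ∀ i d, c.lift (permEnd (Equiv.swap i d)) ∈ M)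
    {f : Function.End X} {b : Equiv.Perm I} (hf : Semiconj c.block f b) : f ∈ M := by
  induction hn : {i | b i ≠ i}.ncard using Nat.strong_induction_on generalizing f b with
  | _ n ih =>
  obtain hempty | hne := {i | b i ≠ i}.eq_empty_or_nonempty
  · refine c.mem_of_block_apply_eq hlocal fun x => (hf x).trans ?_
    exact not_not.1 fun h => (hempty ▸ h : c.block x ∈ (∅ : Set I))
  obtain ⟨i, hi, hmax⟩ := Set.exists_max_image {i | b i ≠ i} c.size (Set.toFinite _) hne
  have hbbi : b (b i) ≠ b i := fun h => hi (b.injective h)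
  obtain ⟨g, u, hg, hu, rfl⟩ := c.exists_eq_mul_lift_swap_mul hf hi (hmax _ hbbi)
  refine mul_mem (ih _ ?_ hg rfl) (mul_mem (hswap _ _) (hlocal i u hu))
  rw [← hn]
  refine Set.ncard_lt_ncard ⟨fun j hj hbj => hj ?_, fun hsub => hsub hbbi (by simp)⟩
  have hji : j ≠ i := by rintro rfl; exact hi hbj
  have hjbi : j ≠ b i := by rintro rfl; exact hbbi hbj
  rw [Equiv.Perm.mul_apply, Equiv.swap_apply_of_ne_of_ne hji hjbi, hbj]

lemma exists_mem_fiberPerms_pos_lt [Finite X] {i j : I} {m : Function.End X}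
    (hm : ∀ x, c.block x = i → c.block (m x) = j) :
    ∃ g ∈ fiberPerms c.block, (∀ x, c.block x ≠ j → g x = x) ∧
      ∀ x, c.block x = i → c.pos (g (m x)) < c.size i := by
  classical
  obtain hle | hle := le_total (c.size j) (c.size i)
  · refine ⟨1, one_mem _, fun x _ => rfl, fun x hx => lt_of_lt_of_le ?_ hle⟩
    exact hm x hx ▸ c.pos_lt (m x)
  let m' : {x // c.block x = i} → {x // c.block x = j} := fun x => ⟨m x, hm x x.2⟩
  let e : {x // c.block x = i} → {x // c.block x = j} := fun x =>
    ⟨c.point j (c.pos x), c.block_point ..⟩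
  have hpos : ∀ x, c.pos (e x) = c.pos x := fun x =>
    c.pos_point_of_lt ((c.pos_lt x).trans_le (x.2.symm ▸ hle))
  have he : Injective e := fun x y h => Subtype.ext (c.eq_of_block_eq_of_pos_eq
    (x.2.trans y.2.symm) (by rw [← hpos x, ← hpos y, h]))
  obtain ⟨g, hg⟩ := exists_perm_mapsTo_of_ncard_le (V := range m') (W := range e)
    ((Finite.card_range_le m').trans (Set.ncard_range_of_injective he).ge)
  refine ⟨Equiv.Perm.ofSubtype g, ofSubtype_mem_fiberPerms g,
    fun x hx => Equiv.Perm.ofSubtype_apply_of_not_mem g hx, fun x hx => ?_⟩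
  obtain ⟨y, hy⟩ := hg (mem_range_self ⟨x, hx⟩)
  rw [Equiv.Perm.ofSubtype_apply_of_mem g (hm x hx), ← hy, hpos]
  exact (c.pos_lt y).trans_eq (congrArg c.size y.2)

lemma mem_of_moves_block [Finite X] [DecidableEq I] (hG : ∀ g ∈ c.units, permEnd g ∈ M)
    (hlocal : ∀ (i : I) (f : Function.End X), (∀ x, c.block x = i → c.block (f x) = i) →
      actOver c.block {i} f ∈ M)
    {i j : I} (hmerge : c.lift (merge i j) ∈ M) (hij : i ≠ j) {m : Function.End X}
    (hfix : ∀ x, c.block x ≠ i → m x = x) (hm : ∀ x, c.block x = i → c.block (m x) = j) :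
    m ∈ M := by
  obtain ⟨g, hg, hgfix, hgpos⟩ := c.exists_mem_fiberPerms_pos_lt hm
  let u : Function.End X := fun x => c.point i (c.pos (g (m x)))
  have hgb : ∀ x, c.block (g x) = c.block x := hg
  have heq : m = permEnd g⁻¹ * (c.lift (merge i j) * (permEnd g * actOver c.block {i} u)) := by
    funext x
    change m x = g⁻¹ (c.lift _ (g (actOver c.block {i} u x)))
    rw [Equiv.Perm.eq_inv_iff_eq]
    by_cases hx : c.block x = i
    · have hgm : c.block (g (m x)) = j := (hgb _).trans (hm x hx)
      rw [actOver_apply_of_mem (A := {i}) u hx, hgfix (u x) (by simpa [u] using hij)]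
      refine c.eq_of_block_eq_of_pos_eq (by simp [u, hgm]) ?_
      have hpos := c.pos_lt (g (m x))
      rw [hgm] at hpos
      simp only [pos_lift, u, block_point, merge_apply_left, c.pos_point_of_lt (hgpos x hx)]
      omega
    · rw [actOver_apply_of_notMem (A := {i}) u hx, hfix x hx, c.lift_apply_of_fixed]
      rw [hgb, merge_apply_of_ne hx]
  rw [heq]
  have hg' := c.fiberPerms_block_le_units hg
  exact mul_mem (hG _ (inv_mem hg')) (mul_mem hmerge (mul_mem (hG _ hg')
    (hlocal i u fun x _ => c.block_point ..)))

lemma lift_merge_eq [DecidableEq I] {i j : I} (h : c.size j ≤ c.size i) :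
    c.lift (merge i j) = c.lift (permEnd (Equiv.swap i j)) * c.lift (merge j i) *
      c.lift (permEnd (Equiv.swap i j)) := by
  funext x
  have hx := c.pos_lt x
  change _ = c.lift _ (c.lift _ (c.lift _ x))
  refine c.eq_of_block_eq_of_pos_eq ?_ ?_
  · simp only [block_lift, permEnd_apply, merge_apply, Equiv.swap_apply_def]
    grind
  · simp only [pos_lift, block_lift, permEnd_apply, merge_apply, Equiv.swap_apply_def]
    grind

lemma lift_merge_mem [DecidableEq I] (hG : ∀ g ∈ c.units, permEnd g ∈ M)
    (hswap : ∀ i d, c.lift (permEnd (Equiv.swap i d)) ∈ M)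
    (hmerge : ∀ i d, d ≠ i → c.size d ≤ c.size i →
      ∃ i' d', d' ≠ i' ∧ c.size i' = c.size i ∧ c.size d' = c.size d ∧ c.lift (merge d' i') ∈ M)
    {i j : I} (hij : i ≠ j) : c.lift (merge i j) ∈ M := by
  have hle : ∀ {i j}, i ≠ j → c.size i ≤ c.size j → c.lift (merge i j) ∈ M := fun hij hsize => by
    obtain ⟨j', i', hne, hj, hi, hmem⟩ := hmerge _ _ hij hsize
    exact c.lift_merge_mem_of_size_eq hG hij hne hi hj hmem
  obtain hsize | hsize := le_total (c.size i) (c.size j)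
  · exact hle hij hsize
  rw [c.lift_merge_eq hsize]
  exact mul_mem (mul_mem (hswap i j) (hle hij.symm hsize)) (hswap i j)

theorem transformations_le [Finite X] [Finite I] [DecidableEq X] [DecidableEq I]
    (hG : ∀ g ∈ c.units, permEnd g ∈ M)
    (hcollapse : ∀ i, 2 ≤ c.size i → (∀ j, c.size j ≠ c.size i - 1) →
      ∃ i', c.size i' = c.size i ∧ c.collapse i' ∈ M)
    (hswap : ∀ i d, c.size d < c.size i → (∀ j, ¬(c.size d < c.size j ∧ c.size j < c.size i)) →
      ∃ i' d', c.size i' = c.size i ∧ c.size d' = c.size d ∧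
        c.lift (permEnd (Equiv.swap i' d')) ∈ M)
    (hmerge : ∀ i d, d ≠ i → c.size d ≤ c.size i →
      ∃ i' d', d' ≠ i' ∧ c.size i' = c.size i ∧ c.size d' = c.size d ∧ c.lift (merge d' i') ∈ M) :
    c.transformations ≤ M := by
  have hswap' := c.lift_swap_mem hG hswap
  have hlocal : ∀ (i : I) (f : Function.End X), (∀ x, c.block x = i → c.block (f x) = i) →
      actOver c.block {i} f ∈ M := fun i f hf =>
    c.actOver_singleton_mem hG (c.collapse_mem hG hcollapse hswap') hf
  refine fun f hf => mem_of_semiconj (fun f b hfb hb => ?_) (fun i j m hij hfix hm => ?_)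
    (c.semiconj_blockMap hf)
  · exact c.mem_of_semiconj_perm hlocal hswap' (b := Equiv.ofBijective b hb) hfb
  · exact c.mem_of_moves_block hG hlocal (c.lift_merge_mem hG hswap' hmerge hij) hij hfix hm

end GeneratingFromUnits

section GeneratingUnits

variable {X I : Type*} (c : BlockCoords X I)

lemma ncard_block_fiber (i : I) : {x | c.block x = i}.ncard = c.size i := by
  have himage : c.pos '' {x | c.block x = i} = Iio (c.size i) := by
    ext a
    refine ⟨?_, fun ha => ⟨c.point i a, c.block_point .., c.pos_point_of_lt ha⟩⟩
    rintro ⟨x, rfl, rfl⟩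
    exact c.pos_lt x
  have hinj : InjOn c.pos {x | c.block x = i} := fun x hx y hy h =>
    c.eq_of_block_eq_of_pos_eq (hx.trans hy.symm) h
  rw [← hinj.ncard_image, himage, Set.ncard_eq_toFinset_card']
  simp

/-- The permutation of the set of blocks induced by a unit. -/
def blockPerm : c.units →* Equiv.Perm I :=
  MonoidHom.toHomPerm
    { toFun := fun g => c.blockMap (permEnd g)
      map_one' := c.blockMap_eq_of_semiconj fun _ => rfl
      map_mul' := fun g h => c.blockMap_mul (c.permEnd_mem_transformations g.2)
        (c.permEnd_mem_transformations h.2) }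

lemma block_apply (g : c.units) (x : X) :
    c.block ((g : Equiv.Perm X) x) = c.blockPerm g (c.block x) :=
  c.semiconj_blockMap (c.permEnd_mem_transformations g.2) x

lemma blockPerm_mem_fiberPerms (g : c.units) : c.blockPerm g ∈ fiberPerms c.size := fun i => by
  rw [← c.ncard_block_fiber, ← c.ncard_block_fiber i,
    ← Set.ncard_image_of_injective {x | c.block x = i} (g : Equiv.Perm X).injective]
  congr 1
  ext x
  obtain ⟨y, rfl⟩ := (g : Equiv.Perm X).surjective x
  simp [c.block_apply]

/-- The size-preserving permutations of the set of blocks whose lifts belong to `H`. -/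
def blockSubgroup (H : Subgroup (Equiv.Perm X)) : Subgroup (Equiv.Perm I) :=
  (H.comap c.liftPerm).map (fiberPerms c.size).subtype

lemma mem_blockSubgroup {H : Subgroup (Equiv.Perm X)} {σ : Equiv.Perm I} :
    σ ∈ c.blockSubgroup H ↔ ∃ h : σ ∈ fiberPerms c.size, c.liftPerm ⟨σ, h⟩ ∈ H := by
  simp [blockSubgroup]

lemma coe_mem_blockSubgroup {H : Subgroup (Equiv.Perm X)} {σ : fiberPerms c.size} :
    (σ : Equiv.Perm I) ∈ c.blockSubgroup H ↔ c.liftPerm σ ∈ H := by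
  simp [mem_blockSubgroup]

lemma units_le_of_fiberPerms_le {H : Subgroup (Equiv.Perm X)} (hblock : fiberPerms c.block ≤ H)
    (hperm : fiberPerms c.size ≤ c.blockSubgroup H) : c.units ≤ H := fun g hg => by
  let σ : fiberPerms c.size := ⟨_, c.blockPerm_mem_fiberPerms ⟨g, hg⟩⟩
  have hσ : c.liftPerm σ ∈ H := c.coe_mem_blockSubgroup.1 (hperm σ.2)
  refine (H.mul_mem_cancel_left (inv_mem hσ)).1 (hblock fun x => ?_)
  rw [Equiv.Perm.mul_apply, ← map_inv, block_liftPerm, c.block_apply ⟨g, hg⟩]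
  exact (σ : Equiv.Perm I).symm_apply_apply _

theorem units_le [Finite X] [Finite I] [DecidableEq X] [DecidableEq I]
    {H : Subgroup (Equiv.Perm X)}
    (hblock : ∀ i, 2 ≤ c.size i →
      ∃ i', c.size i' = c.size i ∧ ∀ x y, c.block x = i' → c.block y = i' → swapSetoid H x y)
    (hperm : ∀ i j, i ≠ j → c.size i = c.size j → swapSetoid (c.blockSubgroup H) i j) :
    c.units ≤ H := by
  have hperm' : ∀ i j, c.size i = c.size j → swapSetoid (c.blockSubgroup H) i j := fun i j hij => by
    obtain rfl | hne := eq_or_ne i j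
    · exact swap_self_mem _ i
    · exact hperm i j hne hij
  refine c.units_le_of_fiberPerms_le (fiberPerms_le_of_swap_mem fun x y hxy => ?_)
    (fiberPerms_le_of_swap_mem hperm')
  obtain hsize | hsize := lt_or_ge (c.size (c.block x)) 2
  · have hx := c.pos_lt x
    have hy := c.pos_lt y
    rw [← hxy] at hy
    rw [c.eq_of_block_eq_of_pos_eq hxy (by omega)]
    exact swap_self_mem _ _
  obtain ⟨i, hi, hswap⟩ := hblock _ hsize
  obtain ⟨hS, hmem⟩ := c.mem_blockSubgroup.1 (hperm' _ _ hi)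
  have hmove : ∀ z, c.block z = c.block x → c.block ((c.liftPerm ⟨_, hS⟩)⁻¹ z) = i := fun z hz => by
    rw [← map_inv, block_liftPerm, hz]
    simp
  have hxyH : swapSetoid H x y := by
    simpa using swapSetoid_apply_apply hmem (hswap _ _ (hmove x rfl) (hmove y hxy.symm))
  exact hxyH

/-- The action of the permutations of the positions on all the blocks of size `a` at once. -/
def diagEnd (a : ℕ) : Equiv.Perm (Fin a) →* Function.End X where
  toFun γ x := if h : c.size (c.block x) = a then
    c.point (c.block x) (γ ⟨c.pos x, h ▸ c.pos_lt x⟩) else x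
  map_one' := by
    funext x
    split_ifs with h
    · exact c.point_block_pos x
    · rfl
  map_mul' γ δ := by
    funext x
    change _ = dite (c.size (c.block (dite _ _ _)) = a) _ _
    by_cases h : c.size (c.block x) = a
    · have hpos (b : Fin a) : c.pos (c.point (c.block x) b) = b := c.pos_point_of_lt (h ▸ b.2)
      simp [h, hpos]
    · simp [h]

/-- The diagonal embedding of the symmetric group on `a` positions. -/
def diag (a : ℕ) : Equiv.Perm (Fin a) →* Equiv.Perm X := (c.diagEnd a).toHomPerm

lemma diag_apply_of_size_eq {a : ℕ} (γ : Equiv.Perm (Fin a)) {x : X} (h : c.size (c.block x) = a) :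
    c.diag a γ x = c.point (c.block x) (γ ⟨c.pos x, h ▸ c.pos_lt x⟩) := dif_pos h

lemma diag_apply_of_size_ne {a : ℕ} (γ : Equiv.Perm (Fin a)) {x : X} (h : c.size (c.block x) ≠ a) :
    c.diag a γ x = x := dif_neg h

lemma diag_point {i : I} (γ : Equiv.Perm (Fin (c.size i))) (b : Fin (c.size i)) :
    c.diag (c.size i) γ (c.point i b) = c.point i (γ b) := by
  rw [c.diag_apply_of_size_eq γ (by simp)]
  simp [c.pos_point_of_lt b.2]

lemma diag_mem_fiberPerms {a : ℕ} (γ : Equiv.Perm (Fin a)) : c.diag a γ ∈ fiberPerms c.block :=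
  fun x => by
    by_cases h : c.size (c.block x) = a
    · rw [c.diag_apply_of_size_eq γ h, block_point]
    · rw [c.diag_apply_of_size_ne γ h]

lemma commute_liftPerm_diag {a : ℕ} (σ : fiberPerms c.size) (γ : Equiv.Perm (Fin a)) :
    Commute (c.liftPerm σ) (c.diag a γ) := by
  ext x
  change c.liftPerm σ (c.diag a γ x) = c.diag a γ (c.liftPerm σ x)
  have hsize : c.size (c.block (c.liftPerm σ x)) = c.size (c.block x) := by
    rw [block_liftPerm, σ.2]
  by_cases h : c.size (c.block x) = a
  · have hpos (i : I) (hi : c.size i = a) (b : Fin a) : c.pos (c.point i b) = b :=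
      c.pos_point_of_lt (hi ▸ b.2)
    rw [c.diag_apply_of_size_eq γ h, c.diag_apply_of_size_eq γ (hsize.trans h)]
    refine c.eq_of_block_eq_of_pos_eq (by simp) ?_
    rw [pos_liftPerm, hpos _ h, hpos _ (hsize.trans h)]
    simp
  · rw [c.diag_apply_of_size_ne γ h, c.diag_apply_of_size_ne γ (by rwa [hsize])]

/-- A pair generating, together with the other units, the symmetric group on block `i`: an
involution supported on that block and an element of odd order acting diagonally on all the blocks
of the same size. -/
structure IsInnerPair [DecidableEq X] (i : I) (u v : Equiv.Perm X) : Prop where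
  sq_eq_one : u ^ 2 = 1
  odd_orderOf : Odd (orderOf v)
  left_mem : u ∈ fiberPerms c.block
  right_mem : v ∈ fiberPerms c.block
  left_apply : ∀ x, c.block x ≠ i → u x = x
  right_apply : ∀ x, c.size (c.block x) ≠ c.size i → v x = x
  commute : ∀ σ, Commute (c.liftPerm σ) v
  swapSetoid : ∀ {H}, u ∈ H → v ∈ H → ∀ x y, c.block x = i → c.block y = i → swapSetoid H x y

/-- A pair generating the symmetric group on the set of blocks of size `a`: an involution and an
element of odd order. -/
structure IsOuterPair [DecidableEq I] (a : ℕ) (σ τ : fiberPerms c.size) : Prop where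
  sq_eq_one : σ ^ 2 = 1
  odd_orderOf : Odd (orderOf τ)
  left_apply : ∀ i, c.size i ≠ a → (σ : Equiv.Perm I) i = i
  right_apply : ∀ i, c.size i ≠ a → (τ : Equiv.Perm I) i = i
  swapSetoid : ∀ {H}, c.liftPerm σ ∈ H → c.liftPerm τ ∈ H →
    ∀ i j, c.size i = a → c.size j = a → swapSetoid (c.blockSubgroup H) i j

lemma exists_isInnerPair [DecidableEq X] (i : I) : ∃ u v, c.IsInnerPair i u v := by
  have : Nonempty (Fin (c.size i)) := ⟨⟨0, c.size_pos i⟩⟩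
  obtain ⟨a, b, γ, hγ, htop⟩ := exists_odd_orderOf_forall_setoid_eq_top (Fin (c.size i))
  refine ⟨Equiv.swap (c.point i a) (c.point i b), c.diag (c.size i) γ, by simp [sq],
    hγ.of_dvd_nat (orderOf_map_dvd _ _), swap_mem_fiberPerms (by simp), c.diag_mem_fiberPerms γ,
    fun x hx => ?_, fun x => c.diag_apply_of_size_ne γ, fun σ => c.commute_liftPerm_diag σ γ,
    fun {H} hu hv x y hx hy => ?_⟩
  · exact Equiv.swap_apply_of_ne_of_ne (by rintro rfl; simp at hx) (by rintro rfl; simp at hx)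
  · have hR := htop ((_root_.swapSetoid H).comap fun a : Fin (c.size i) => c.point i a)
      (fun a b hab => by
        have := swapSetoid_apply_apply hv hab
        rwa [diag_point, diag_point] at this) hu
    have hxy := Setoid.eq_top_iff.1 hR ⟨c.pos x, hx ▸ c.pos_lt x⟩ ⟨c.pos y, hy ▸ c.pos_lt y⟩
    rw [Setoid.comap_rel] at hxy
    rwa [c.point_pos hx, c.point_pos hy] at hxy

lemma exists_isOuterPair [Finite I] [DecidableEq I] (i : I) :
    ∃ σ τ, c.IsOuterPair (c.size i) σ τ := by
  have : Nonempty {j // c.size j = c.size i} := ⟨i, rfl⟩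
  obtain ⟨x, y, γ, hγ, htop⟩ :=
    exists_odd_orderOf_forall_setoid_eq_top {j // c.size j = c.size i}
  have hxy : c.size x = c.size y := x.2.trans y.2.symm
  refine ⟨⟨_, swap_mem_fiberPerms hxy⟩, ⟨_, ofSubtype_mem_fiberPerms γ⟩, ?_, ?_, fun j hj => ?_,
    fun j hj => Equiv.Perm.ofSubtype_apply_of_not_mem γ hj, fun {H} hσ hτ j k hj hk => ?_⟩
  · exact Subtype.ext (by simp [sq])
  · rw [← Subgroup.orderOf_coe]
    exact hγ.of_dvd_nat (orderOf_map_dvd _ _)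
  · exact Equiv.swap_apply_of_ne_of_ne (by rintro rfl; exact hj x.2) (by rintro rfl; exact hj y.2)
  · have hR := htop ((_root_.swapSetoid (c.blockSubgroup H)).comap Subtype.val) (fun a b hab => by
      have := swapSetoid_apply_apply (c.coe_mem_blockSubgroup.2 hτ) hab
      rwa [Equiv.Perm.ofSubtype_apply_coe, Equiv.Perm.ofSubtype_apply_coe] at this)
      (c.coe_mem_blockSubgroup.2 hσ)
    exact Setoid.eq_top_iff.1 hR ⟨j, hj⟩ ⟨k, hk⟩

/-- The block sizes greater than `1`. -/
def bigSizes : Set ℕ := {a | 2 ≤ a ∧ ∃ i, c.size i = a}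

/-- The sizes of at least two blocks. -/
def repeatedSizes : Set ℕ := {a | ∃ i j, i ≠ j ∧ c.size i = a ∧ c.size j = a}

lemma finite_bigSizes [Finite I] : c.bigSizes.Finite :=
  (finite_range c.size).subset fun _ ha => ha.2

lemma finite_repeatedSizes [Finite I] : c.repeatedSizes.Finite :=
  (finite_range c.size).subset fun _ ⟨i, _, _, hi, _⟩ => ⟨i, hi⟩

lemma exists_generating_pairs [Finite X] [Finite I] :
    ∃ u v : c.bigSizes ⊕ c.repeatedSizes → Equiv.Perm X,
      (∀ x, u x ∈ c.units ∧ v x ∈ c.units) ∧ (∀ x, u x ^ 2 = 1) ∧ (∀ x, Odd (orderOf (v x))) ∧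
      (∀ x z, c.size (c.block z) ≠ Sum.elim (↑) (↑) x → u x z = z ∧ v x z = z) ∧
      (∀ a b, Commute (u (.inr a)) (v (.inl b))) ∧
      ∀ H, (∀ x, u x ∈ H ∧ v x ∈ H) → c.units ≤ H := by
  classical
  have hinner : ∀ a : c.bigSizes, ∃ i u v, c.size i = a ∧ c.IsInnerPair i u v :=
    fun ⟨a, _, i, hi⟩ =>
      let ⟨u, v, h⟩ := c.exists_isInnerPair i
      ⟨i, u, v, hi, h⟩
  have houter : ∀ a : c.repeatedSizes, ∃ σ τ, c.IsOuterPair a σ τ := fun ⟨a, i, j, _, hi, _⟩ =>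
    hi ▸ c.exists_isOuterPair i
  choose i u v hi huv using hinner
  choose σ τ hστ using houter
  have hlift : ∀ (ρ : fiberPerms c.size) z, (ρ : Equiv.Perm I) (c.block z) = c.block z →
      c.liftPerm ρ z = z := fun ρ z h => c.lift_apply_of_fixed h
  refine ⟨Sum.elim u (c.liftPerm ∘ σ), Sum.elim v (c.liftPerm ∘ τ), ?_, ?_, ?_, ?_,
    fun a b => (huv b).commute (σ a), fun H hH => c.units_le ?_ ?_⟩
  · rintro (a | a)
    · exact ⟨c.fiberPerms_block_le_units (huv a).left_mem,
        c.fiberPerms_block_le_units (huv a).right_mem⟩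
    · exact ⟨c.liftPerm_mem_units _, c.liftPerm_mem_units _⟩
  · rintro (a | a)
    · exact (huv a).sq_eq_one
    · simp [← map_pow, (hστ a).sq_eq_one]
  · rintro (a | a)
    · exact (huv a).odd_orderOf
    · exact (hστ a).odd_orderOf.of_dvd_nat (orderOf_map_dvd _ _)
  · rintro (a | a) z hz
    · exact ⟨(huv a).left_apply z (fun h => hz (h ▸ hi a)),
        (huv a).right_apply z (by rwa [hi a])⟩
    · exact ⟨hlift _ z ((hστ a).left_apply _ hz), hlift _ z ((hστ a).right_apply _ hz)⟩
  · intro j hj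
    have ha := hH (.inl ⟨_, hj, j, rfl⟩)
    exact ⟨_, hi ⟨_, hj, j, rfl⟩, (huv _).swapSetoid ha.1 ha.2⟩
  · intro j k hne hjk
    have ha := hH (.inr ⟨_, j, k, hne, rfl, hjk.symm⟩)
    exact (hστ ⟨_, j, k, hne, rfl, hjk.symm⟩).swapSetoid ha.1 ha.2 j k rfl hjk.symm

/-- The cyclic order of the pairs of generators: by block size, the pair permuting the blocks of a
given size preceding the pair acting inside one of them. -/
def pairIndex : c.bigSizes ⊕ c.repeatedSizes → ℕ :=
  Sum.elim (fun a => 2 * a + 1) (fun a => 2 * a)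

lemma pairIndex_injective : Injective c.pairIndex := by
  rintro (a | a) (b | b) hab <;> simp only [pairIndex, Sum.elim_inl, Sum.elim_inr] at hab
  · exact congrArg Sum.inl (Subtype.ext (by omega))
  · omega
  · omega
  · exact congrArg Sum.inr (Subtype.ext (by omega))

lemma pairIndex_div_two (x : c.bigSizes ⊕ c.repeatedSizes) :
    c.pairIndex x / 2 = Sum.elim (↑) (↑) x := by
  rcases x with a | a <;> simp only [pairIndex, Sum.elim_inl, Sum.elim_inr] <;> omega

lemma commute_of_pairIndex {u v : c.bigSizes ⊕ c.repeatedSizes → Equiv.Perm X}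
    (hfix : ∀ x z, c.size (c.block z) ≠ Sum.elim (↑) (↑) x → u x z = z ∧ v x z = z)
    (hcomm : ∀ a b, Commute (u (.inr a)) (v (.inl b))) {x y : c.bigSizes ⊕ c.repeatedSizes}
    (hxy : c.pairIndex x < c.pairIndex y ∨ c.pairIndex x / 2 ≠ c.pairIndex y / 2) :
    Commute (u x) (v y) := by
  by_cases h : c.pairIndex x / 2 = c.pairIndex y / 2
  · rcases x with a | a <;> rcases y with b | b <;>
      simp only [pairIndex, Sum.elim_inl, Sum.elim_inr] at hxy h
    · omega
    · omega
    · exact hcomm a b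
    · omega
  · refine Equiv.Perm.Disjoint.commute fun z => ?_
    rw [c.pairIndex_div_two x, c.pairIndex_div_two y] at h
    by_cases hz : c.size (c.block z) = Sum.elim (↑) (↑) x
    · exact Or.inr (hfix y z (hz ▸ h)).2
    · exact Or.inl (hfix x z hz).1

/-- The `2p+q+g(t)` pairs of generators are arranged in a cycle, each involution being multiplied by
the element of odd order of the next pair, with which it commutes. -/
lemma exists_closure_eq_units_of_ne [Finite X] [Finite I] {x y : c.bigSizes ⊕ c.repeatedSizes}
    (hne : Sum.elim (↑) (↑) x ≠ (Sum.elim (↑) (↑) y : ℕ)) :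
    ∃ w : c.bigSizes ⊕ c.repeatedSizes → Equiv.Perm X,
      Subgroup.closure (range w) = c.units := by
  obtain ⟨u, v, hunits, hu, hv, hfix, hcomm, hgen⟩ := c.exists_generating_pairs
  have := c.finite_bigSizes.to_subtype
  have := c.finite_repeatedSizes.to_subtype
  obtain ⟨θ, hθ⟩ := exists_perm_lt_or_forall_le c.pairIndex_injective
  refine ⟨fun z => u z * v (θ z), le_antisymm ?_ (hgen _ ?_)⟩
  · rw [Subgroup.closure_le]
    rintro _ ⟨z, rfl⟩
    exact mul_mem (hunits _).1 (hunits _).2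
  refine forall_mem_and_mem_of_mul_mem θ
    (fun z => c.commute_of_pairIndex hfix hcomm ((hθ z).imp_right fun h heq => hne ?_)) hu hv
    fun z => Subgroup.subset_closure ⟨z, rfl⟩
  have hx := h x
  have hy := h y
  rw [← pairIndex_div_two, ← pairIndex_div_two]
  omega

lemma commute_liftPerm_swap [DecidableEq I] {u : Equiv.Perm X} {i j k : I}
    (hu : ∀ x, c.block x ≠ i → u x = x) (hj : j ≠ i) (hk : k ≠ i)
    (h : Equiv.swap j k ∈ fiberPerms c.size) : Commute (c.liftPerm ⟨_, h⟩) u :=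
  Equiv.Perm.Disjoint.commute fun z => by
    obtain hz | hz := eq_or_ne (c.block z) i
    · refine Or.inl (c.lift_apply_of_fixed ?_)
      subst hz
      exact Equiv.swap_apply_of_ne_of_ne hj.symm hk.symm
    · exact Or.inr (hu z hz)

lemma swapSetoid_of_isCycleOn [DecidableEq I] {H : Subgroup (Equiv.Perm X)} {u : Equiv.Perm X}
    {ρ : fiberPerms c.size} {i : I} {s : Set I} (hρ : (ρ : Equiv.Perm I).IsCycleOn s)
    (hs : s.Finite) (hi : i ∈ s) (hne : (ρ : Equiv.Perm I) i ≠ i)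
    (hu : ∀ x, c.block x ≠ i → u x = x) (hz : u * c.liftPerm ρ ∈ H)
    (hswap : swapSetoid (c.blockSubgroup H) i ((ρ : Equiv.Perm I) i)) {k : I} (hk : k ∈ s) :
    swapSetoid (c.blockSubgroup H) i k := by
  have hstep : ∀ k, swapSetoid (c.blockSubgroup H) i k →
      swapSetoid (c.blockSubgroup H) i ((ρ : Equiv.Perm I) k) := fun k hk => by
    obtain h | h := eq_or_ne ((ρ : Equiv.Perm I) k) i
    · rw [h]
    refine Setoid.trans' _ hswap ?_
    obtain ⟨hS, hmem⟩ := c.mem_blockSubgroup.1 hk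
    let κ : fiberPerms c.size := ⟨_, hS⟩
    have hconj : Equiv.swap ((ρ : Equiv.Perm I) i) ((ρ : Equiv.Perm I) k) =
        (ρ * κ * ρ⁻¹ : fiberPerms c.size) := Equiv.swap_apply_apply ..
    have hS' := hconj ▸ (ρ * κ * ρ⁻¹).2
    refine c.mem_blockSubgroup.2 ⟨hS', ?_⟩
    have hlift : c.liftPerm ⟨_, hS'⟩ = c.liftPerm ρ * c.liftPerm κ * (c.liftPerm ρ)⁻¹ := by
      rw [← map_inv, ← map_mul, ← map_mul]
      exact congrArg c.liftPerm (Subtype.ext hconj)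
    have hcomm := c.commute_liftPerm_swap hu hne h hS'
    have := mul_mem (mul_mem hz hmem) (inv_mem hz)
    rw [show u * c.liftPerm ρ * c.liftPerm κ * (u * c.liftPerm ρ)⁻¹ =
      u * c.liftPerm ⟨_, hS'⟩ * u⁻¹ by rw [hlift]; group] at this
    rwa [← hcomm.eq, mul_inv_cancel_right] at this
  obtain ⟨n, rfl⟩ := hρ.exists_pow_eq' hs hi hk
  clear hk
  induction n with
  | zero => exact Setoid.refl' _ i
  | succ n ih => rw [pow_succ']; exact hstep _ ih

lemma exists_closure_pair_eq_units [Finite X] [Finite I] {i j : I} (hij : i ≠ j)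
    (hsize : c.size j = c.size i) (hbig : ∀ a ∈ c.bigSizes, a = c.size i)
    (hrep : ∀ a ∈ c.repeatedSizes, a = c.size i) :
    ∃ y z : Equiv.Perm X, Subgroup.closure {y, z} = c.units := by
  classical
  obtain ⟨ρ, hρ, hcycle⟩ := exists_mem_fiberPerms_isCycleOn c.size (c.size i)
  have hne : ρ i ≠ i := hcycle.apply_ne ⟨i, rfl, j, hsize, hij⟩ rfl
  obtain ⟨u, v, huv⟩ := c.exists_isInnerPair i
  have hσ := swap_mem_fiberPerms (hρ i).symm
  refine ⟨c.liftPerm ⟨_, hσ⟩ * v, u * c.liftPerm ⟨ρ, hρ⟩, le_antisymm ?_ ?_⟩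
  · rw [Subgroup.closure_le]
    rintro _ (rfl | rfl)
    · exact mul_mem (c.liftPerm_mem_units _) (c.fiberPerms_block_le_units huv.right_mem)
    · exact mul_mem (c.fiberPerms_block_le_units huv.left_mem) (c.liftPerm_mem_units _)
  set H := Subgroup.closure {c.liftPerm ⟨_, hσ⟩ * v, u * c.liftPerm ⟨ρ, hρ⟩}
  have hz : u * c.liftPerm ⟨ρ, hρ⟩ ∈ H := Subgroup.subset_closure (by simp)
  obtain ⟨hswap, hv⟩ := mem_and_mem_of_mul_mem (H := H) (huv.commute _)
    (by rw [← map_pow, show (⟨_, hσ⟩ : fiberPerms c.size) ^ 2 = 1 from Subtype.ext (by simp [sq]),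
      map_one]) huv.odd_orderOf (Subgroup.subset_closure (by simp))
  have hR : ∀ k, c.size k = c.size i → swapSetoid (c.blockSubgroup H) i k := fun k hk =>
    c.swapSetoid_of_isCycleOn (ρ := ⟨ρ, hρ⟩) hcycle (toFinite _) rfl hne huv.left_apply hz
      (c.mem_blockSubgroup.2 ⟨hσ, hswap⟩) hk
  have hperm : ∀ k k', k ≠ k' → c.size k = c.size k' → swapSetoid (c.blockSubgroup H) k k' :=
    fun k k' hkk' h => by
      have hk := hrep _ ⟨k, k', hkk', h, rfl⟩
      exact Setoid.trans' _ (Setoid.symm' _ (hR k (h.trans hk))) (hR k' hk)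
  have hρH : ρ ∈ c.blockSubgroup H := fiberPerms_le_of_swap_mem (fun k k' h => by
    obtain rfl | hkk' := eq_or_ne k k'
    · exact swap_self_mem _ k
    · exact hperm k k' hkk' h) hρ
  have hu : u ∈ H := (H.mul_mem_cancel_right (c.mem_blockSubgroup.1 hρH).2).1 hz
  exact c.units_le (fun k hk => ⟨i, (hbig _ ⟨hk, k, rfl⟩).symm, huv.swapSetoid hu hv⟩) hperm

theorem exists_closure_eq_units [Finite X] [Finite I] :
    ∃ S : Set (Equiv.Perm X), S.Finite ∧
      S.ncard ≤ max 2 (c.bigSizes.ncard + c.repeatedSizes.ncard) ∧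
      Subgroup.closure S = c.units := by
  have := c.finite_bigSizes.to_subtype
  have := c.finite_repeatedSizes.to_subtype
  by_cases hne : ∃ x y : c.bigSizes ⊕ c.repeatedSizes,
      Sum.elim (↑) (↑) x ≠ (Sum.elim (↑) (↑) y : ℕ)
  · obtain ⟨x, y, hxy⟩ := hne
    obtain ⟨w, hw⟩ := c.exists_closure_eq_units_of_ne hxy
    refine ⟨range w, finite_range w, le_max_of_le_right ?_, hw⟩
    rw [← image_univ]
    refine (ncard_image_le finite_univ).trans ?_
    rw [ncard_univ, Nat.card_sum, Nat.card_coe_set_eq, Nat.card_coe_set_eq]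
  push Not at hne
  by_cases hboth : c.bigSizes.Nonempty ∧ c.repeatedSizes.Nonempty
  · obtain ⟨-, _, i, j, hij, rfl, hj⟩ := hboth
    have hb : c.size i ∈ c.repeatedSizes := ⟨i, j, hij, rfl, hj⟩
    obtain ⟨y, z, hyz⟩ := c.exists_closure_pair_eq_units hij hj
      (fun _ ha => hne (.inl ⟨_, ha⟩) (.inr ⟨_, hb⟩)) fun _ ha => hne (.inr ⟨_, ha⟩) (.inr ⟨_, hb⟩)
    exact ⟨{y, z}, toFinite _, le_max_of_le_left (ncard_insert_le _ _ |>.trans (by simp)), hyz⟩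
  · obtain ⟨u, v, hunits, -, -, -, -, hgen⟩ := c.exists_generating_pairs
    have hsub : Subsingleton (c.bigSizes ⊕ c.repeatedSizes) := ⟨by
      rintro (a | a) (b | b)
      · exact congrArg _ (Subtype.ext (hne (.inl a) (.inl b)))
      · exact absurd ⟨⟨a, a.2⟩, b, b.2⟩ hboth
      · exact absurd ⟨⟨b, b.2⟩, a, a.2⟩ hboth
      · exact congrArg _ (Subtype.ext (hne (.inr a) (.inr b)))⟩
    refine ⟨range u ∪ range v, toFinite _, le_max_of_le_left ?_, le_antisymm ?_ (hgen _ fun x =>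
      ⟨Subgroup.subset_closure (.inl ⟨x, rfl⟩), Subgroup.subset_closure (.inr ⟨x, rfl⟩)⟩)⟩
    · refine (ncard_union_le _ _).trans (Nat.add_le_add (b := 1) (d := 1) ?_ ?_) <;>
        exact ncard_le_one_iff_subsingleton.2 (subsingleton_range _)
    · rw [Subgroup.closure_le]
      rintro _ (⟨x, rfl⟩ | ⟨x, rfl⟩)
      exacts [(hunits x).1, (hunits x).2]

end GeneratingUnits

section SignsOfUnits

variable {X I : Type*} (c : BlockCoords X I)

/-- The retraction of the group of units onto the lifts of permutations of the set of blocks. -/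
def straighten : c.units →* c.units :=
  (c.liftPerm.codRestrict c.units c.liftPerm_mem_units).comp
    (c.blockPerm.codRestrict (fiberPerms c.size) c.blockPerm_mem_fiberPerms)

lemma blockPerm_eq_one {g : c.units} (hg : (g : Equiv.Perm X) ∈ fiberPerms c.block) :
    c.blockPerm g = 1 :=
  Equiv.ext fun i => by
    have := c.block_apply g (c.point i 0)
    rwa [hg, block_point, eq_comm] at this

lemma straighten_eq_one {g : c.units} (hg : (g : Equiv.Perm X) ∈ fiberPerms c.block) :
    c.straighten g = 1 := by
  have : c.blockPerm.codRestrict (fiberPerms c.size) c.blockPerm_mem_fiberPerms g = 1 :=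
    Subtype.ext (c.blockPerm_eq_one hg)
  rw [straighten, MonoidHom.comp_apply, this, map_one]

lemma blockPerm_liftPerm (σ : fiberPerms c.size) :
    c.blockPerm ⟨c.liftPerm σ, c.liftPerm_mem_units σ⟩ = σ :=
  Equiv.ext fun i => by
    have := c.block_apply ⟨c.liftPerm σ, c.liftPerm_mem_units σ⟩ (c.point i 0)
    rwa [block_liftPerm, block_point, eq_comm] at this

lemma straighten_liftPerm (σ : fiberPerms c.size) :
    c.straighten ⟨c.liftPerm σ, c.liftPerm_mem_units σ⟩ =
      ⟨c.liftPerm σ, c.liftPerm_mem_units σ⟩ :=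
  Subtype.ext (congrArg c.liftPerm (Subtype.ext (c.blockPerm_liftPerm σ)))

lemma units_le_fiberPerms : c.units ≤ fiberPerms fun x => c.size (c.block x) := fun g hg x => by
  change c.size (c.block (g x)) = c.size (c.block x)
  rw [c.block_apply ⟨g, hg⟩, c.blockPerm_mem_fiberPerms]

variable [Fintype X] [Fintype I] [DecidableEq X] [DecidableEq I]

/-- The sign of the action of a unit on the points of the blocks of size `a`, corrected by the sign
of its straightening so as to vanish on the lifts of permutations of the set of blocks. -/
def innerSign (a : ℕ) : c.units →* ℤˣ :=
  let sign : c.units →* ℤˣ := (fiberSign _ a).comp (Subgroup.inclusion c.units_le_fiberPerms)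
  sign * sign.comp c.straighten

/-- The sign of the action of a unit on the set of blocks of size `a`. -/
def outerSign (a : ℕ) : c.units →* ℤˣ :=
  (fiberSign c.size a).comp (c.blockPerm.codRestrict _ c.blockPerm_mem_fiberPerms)

/-- The homomorphism to an elementary abelian `2`-group which bounds the rank of the group of units
from below. -/
def signs : c.units →* (c.bigSizes ⊕ c.repeatedSizes → ℤˣ) :=
  MonoidHom.pi (Sum.rec (fun a => c.innerSign a) fun a => c.outerSign a)

lemma signs_swap {x y : X} (hxy : x ≠ y) (h : c.block x = c.block y) {a : c.bigSizes}
    (ha : c.size (c.block x) = a) :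
    c.signs ⟨_, c.fiberPerms_block_le_units (swap_mem_fiberPerms h)⟩ =
      Pi.mulSingle (.inl a) (-1) := by
  funext b
  rcases b with b | b
  · change fiberSign _ _ _ * fiberSign _ _ (Subgroup.inclusion _ (c.straighten _)) = _
    rw [c.straighten_eq_one (swap_mem_fiberPerms h), map_one, map_one, mul_one]
    refine (fiberSign_swap (ρ := fun x => c.size (c.block x)) hxy (congrArg _ h) _).trans ?_
    simp [Pi.mulSingle_apply, Subtype.ext_iff, ha]
  · change fiberSign _ _ _ = _
    rw [fiberSign_eq_one, Pi.mulSingle_eq_of_ne Sum.inr_ne_inl]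
    exact fun i _ => Equiv.congr_fun (c.blockPerm_eq_one (swap_mem_fiberPerms h)) i

lemma signs_liftPerm_swap {i j : I} (hij : i ≠ j) (h : c.size i = c.size j)
    (hi : c.size i ∈ c.repeatedSizes) :
    c.signs ⟨c.liftPerm ⟨_, swap_mem_fiberPerms h⟩, c.liftPerm_mem_units _⟩ =
      Pi.mulSingle (.inr ⟨_, hi⟩) (-1) := by
  funext b
  rcases b with b | b
  · change fiberSign _ _ _ * fiberSign _ _ (Subgroup.inclusion _ (c.straighten _)) = _
    rw [c.straighten_liftPerm, Int.units_mul_self, Pi.mulSingle_eq_of_ne Sum.inl_ne_inr]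
  · change fiberSign _ _ _ = _
    rw [show c.blockPerm.codRestrict _ c.blockPerm_mem_fiberPerms _ = ⟨_, swap_mem_fiberPerms h⟩
      from Subtype.ext (c.blockPerm_liftPerm _), fiberSign_swap hij h]
    simp [Pi.mulSingle_apply, Subtype.ext_iff]

lemma signs_surjective : Surjective c.signs := by
  have hmulSingle : ∀ x, Pi.mulSingle x (-1) ∈ c.signs.range := by
    rintro (⟨a, ha, i, rfl⟩ | ⟨a, i, j, hij, rfl, hj⟩)
    · refine ⟨_, c.signs_swap (x := c.point i 0) (y := c.point i 1) (fun h => ?_) (by simp)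
        (by simp)⟩
      · have := congrArg c.pos h
        rw [c.pos_point_of_lt (by omega), c.pos_point_of_lt (by omega)] at this
        omega
    · exact ⟨_, c.signs_liftPerm_swap hij hj.symm _⟩
  rw [← MonoidHom.range_eq_top, eq_top_iff]
  rintro f -
  have := c.finite_bigSizes.fintype
  have := c.finite_repeatedSizes.fintype
  rw [← Finset.univ_prod_mulSingle f]
  refine Subgroup.prod_mem _ fun x _ => ?_
  obtain h | h := Int.units_eq_one_or (f x) <;> rw [h]
  · rw [Pi.mulSingle_one]
    exact one_mem _
  · exact hmulSingle x

end SignsOfUnits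

section RankOfUnits

variable {X I : Type*} (c : BlockCoords X I) [Finite X] [Finite I]

lemma ncard_add_ncard_le_rank : c.bigSizes.ncard + c.repeatedSizes.ncard ≤ Group.rank c.units := by
  classical
  have := Fintype.ofFinite X
  have := Fintype.ofFinite I
  have := c.finite_bigSizes.to_subtype
  have := c.finite_repeatedSizes.to_subtype
  have hrank := Group.rank_le_of_surjective c.signs c.signs_surjective
  have hcard := card_dvd_exponent_pow_rank' (c.bigSizes ⊕ c.repeatedSizes → ℤˣ) (n := 2)
    fun f => funext fun x => Int.units_sq (f x)
  rw [Nat.card_fun, Nat.card_sum, Nat.card_coe_set_eq, Nat.card_coe_set_eq,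
    Nat.card_eq_fintype_card, Fintype.card_units_int, Nat.pow_dvd_pow_iff_le_right one_lt_two]
    at hcard
  exact hcard.trans hrank

lemma card_units_le_two [IsCyclic c.units] : Nat.card c.units ≤ 2 := by
  classical
  let : CommGroup c.units := IsCyclic.commGroup
  have := Fintype.ofFinite c.units
  let H : Subgroup (Equiv.Perm X) := (powMonoidHom 2 : c.units →* c.units).ker.map c.units.subtype
  have hmem : ∀ g (hg : g ∈ c.units), g ^ 2 = 1 → g ∈ H := fun g hg h =>
    ⟨⟨g, hg⟩, Subtype.ext h, rfl⟩
  have hle : c.units ≤ H := c.units_le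
    (fun i _ => ⟨i, rfl, fun x y hx hy => hmem _
      (c.fiberPerms_block_le_units (swap_mem_fiberPerms (hx.trans hy.symm))) (by simp [sq])⟩)
    fun i j _ hij => c.mem_blockSubgroup.2 ⟨swap_mem_fiberPerms hij,
      hmem _ (c.liftPerm_mem_units _) (by
        rw [← map_pow, show (⟨_, swap_mem_fiberPerms hij⟩ : fiberPerms c.size) ^ 2 = 1 from
          Subtype.ext (by simp [sq]), map_one])⟩
  have hsq : ∀ g : c.units, g ^ 2 = 1 := fun g => by
    obtain ⟨g', hg', h⟩ := hle g.2
    rwa [← Subtype.ext h]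
  rw [Nat.card_eq_fintype_card, ← Finset.card_univ]
  simpa [hsq] using IsCyclic.card_pow_eq_one_le (α := c.units) two_pos

lemma two_le_rank (h : 3 ≤ Nat.card c.units) : 2 ≤ Group.rank c.units := by
  by_contra! hlt
  obtain ⟨S, hS, hclosure⟩ := Group.rank_spec c.units
  obtain ⟨g, hg⟩ := Finset.card_le_one_iff_subset_singleton.1 (hS.trans_le (Nat.le_of_lt_succ hlt))
  have : IsCyclic c.units := isCyclic_iff_exists_zpowers_eq_top.2 ⟨g, by
    rw [Subgroup.zpowers_eq_closure, eq_top_iff, ← hclosure]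
    exact Subgroup.closure_mono (by exact_mod_cast hg)⟩
  exact (h.trans c.card_units_le_two).not_gt (by norm_num)

end RankOfUnits

section Factors

variable {X I : Type*} (c : BlockCoords X I)

/-- The submonoid of transformations that permute the blocks and preserve their sizes. -/
def sizePreserving : Submonoid (Function.End X) where
  carrier := {f | ∃ σ : fiberPerms c.size, Semiconj c.block f (σ : Equiv.Perm I)}
  one_mem' := ⟨1, fun _ => rfl⟩
  mul_mem' := fun ⟨σ, hf⟩ ⟨τ, hg⟩ => ⟨σ * τ, hf.comp_right hg⟩

lemma mem_units_of_permEnd_mem [Finite I] {g : Equiv.Perm X}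
    (hg : permEnd g ∈ c.transformations) : g ∈ c.units := fun x y => by
  have hsurj : Surjective (c.blockMap (permEnd g)) := fun i => by
    obtain ⟨x, hx⟩ := g.surjective (c.point i 0)
    exact ⟨c.block x, by rw [← c.semiconj_blockMap hg, permEnd_apply, hx, block_point]⟩
  have hblock := c.semiconj_blockMap hg
  simp only [Semiconj, permEnd_apply] at hblock
  rw [hblock, hblock, (Finite.injective_iff_surjective.2 hsurj).eq_iff]

lemma exists_mem_units_of_injective [Finite X] [Finite I] {f : Function.End X}
    (hf : f ∈ c.transformations) (hinj : Injective f) : ∃ g ∈ c.units, permEnd g = f :=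
  ⟨Equiv.ofBijective f (Finite.injective_iff_bijective.1 hinj),
    c.mem_units_of_permEnd_mem hf, rfl⟩

lemma semiconj_units [Finite X] {g : Equiv.Perm X} (hg : g ∈ c.units) :
    ∃ σ : fiberPerms c.size, Semiconj c.block (permEnd g) (σ : Equiv.Perm I) :=
  ⟨⟨_, c.blockPerm_mem_fiberPerms ⟨g, hg⟩⟩, c.block_apply ⟨g, hg⟩⟩

lemma injective_blockMap_of_mul {v e g : Function.End X} (hv : v ∈ c.transformations)
    (he : e ∈ c.transformations) {σ : fiberPerms c.size}
    (hg : Semiconj c.block g (σ : Equiv.Perm I)) (hw : Injective (c.blockMap (v * (e * g)))) :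
    Injective (c.blockMap e) := by
  have hgT := c.mem_transformations_of_semiconj hg
  rw [c.blockMap_mul hv (mul_mem he hgT), c.blockMap_mul he hgT,
    c.blockMap_eq_of_semiconj hg] at hw
  exact (Injective.of_comp_iff' _ (σ : Equiv.Perm I).bijective).1 hw.of_comp

lemma ncard_le_size_blockMap [Finite X] {v e g : Function.End X} (he : e ∈ c.transformations)
    {σ : I → I} (hg : Semiconj c.block g σ) {i : I} {A : Set X} (hA : ∀ x ∈ A, c.block x = i)
    (hinj : InjOn (v * (e * g)) A) : A.ncard ≤ c.size (c.blockMap e (σ i)) := by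
  rw [← c.ncard_block_fiber]
  refine Set.ncard_le_ncard_of_injOn (e * g) (fun x hx => ?_) (fun x hx y hy hxy => ?_)
    (Set.toFinite _)
  · change c.block (e (g x)) = _
    rw [c.semiconj_blockMap he, hg.eq, hA x hx]
  · exact hinj hx hy (congrArg v hxy)

lemma exists_not_injective_factor [Finite X] [Finite I] {S : Set (Function.End X)}
    (hS : Submonoid.closure S = c.transformations) {w : Function.End X}
    (hw : w ∈ c.transformations) (hinj : ¬Injective w) :
    ∃ e ∈ S, ¬Injective e ∧ ∃ v ∈ c.transformations, ∃ g ∈ c.units, w = v * (e * permEnd g) := by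
  obtain ⟨e, he, heN, v, hv, g, hg, hgN, hweg⟩ :=
    exists_factor_notMem (injectiveEnd X) (hS ▸ hw) hinj
  obtain ⟨u, hu, rfl⟩ := c.exists_mem_units_of_injective (hS ▸ hg) hgN
  exact ⟨e, he, heN, v, hS ▸ hv, u, hu, hweg⟩

end Factors

section Types

variable {X I : Type*} (c : BlockCoords X I)

/-- The pairs of sizes of two distinct blocks. Each of them requires an irredundant generator
which merges two such blocks. -/
def mergeTypes : Set (Sym2 ℕ) := {z | ∃ d i, d ≠ i ∧ s(c.size d, c.size i) = z}

/-- The block sizes which are not minimal. Each of them requires a generator which sends a block of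
this size to a smaller one, while permuting the blocks. -/
def shrinkTypes : Set ℕ := {a | ∃ d i, c.size d < c.size i ∧ c.size i = a}

/-- The block sizes `a ≥ 2` such that no block has size `a - 1`. Each of them requires a generator
which acts non-injectively on a block of this size, while preserving the sizes of all blocks. -/
def collapseTypes : Set ℕ := {a | 2 ≤ a ∧ (∃ i, c.size i = a) ∧ ∀ j, c.size j ≠ a - 1}

instance [Finite I] : Finite c.mergeTypes :=
  ((Set.finite_range fun p : I × I => s(c.size p.1, c.size p.2)).subset
    (by rintro _ ⟨d, i, -, rfl⟩; exact ⟨(d, i), rfl⟩)).to_subtype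

instance [Finite I] : Finite c.shrinkTypes :=
  ((Set.finite_range c.size).subset (by rintro _ ⟨-, i, -, rfl⟩; exact ⟨i, rfl⟩)).to_subtype

instance [Finite I] : Finite c.collapseTypes :=
  ((Set.finite_range c.size).subset (by rintro _ ⟨-, ⟨i, rfl⟩, -⟩; exact ⟨i, rfl⟩)).to_subtype

/-- `e` identifies points, but only in distinct blocks whose sizes form the pair `z`. -/
def HasMergeType (z : Sym2 ℕ) (e : Function.End X) : Prop :=
  ¬Injective e ∧ ∀ x y, x ≠ y → e x = e y →
    c.block x ≠ c.block y ∧ s(c.size (c.block x), c.size (c.block y)) = z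

/-- `e` permutes the blocks, and `a` is the largest size of a block sent to a smaller one. -/
def HasShrinkType (a : ℕ) (e : Function.End X) : Prop :=
  Injective (c.blockMap e) ∧ IsGreatest (c.size '' {i | c.size (c.blockMap e i) < c.size i}) a

/-- `e` preserves block sizes and identifies points, but only within blocks of size `a`. -/
def HasCollapseType (a : ℕ) (e : Function.End X) : Prop :=
  ¬Injective e ∧ (∀ i, c.size (c.blockMap e i) = c.size i) ∧ ∀ x y, x ≠ y → e x = e y →
    c.block x = c.block y ∧ c.size (c.block x) = a

lemma size_block_apply [Finite X] {g : Equiv.Perm X} (hg : g ∈ c.units) (x : X) :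
    c.size (c.block (g x)) = c.size (c.block x) := c.units_le_fiberPerms hg x

lemma lift_merge_apply_eq [DecidableEq I] {d i : I} (h : c.size d ≤ c.size i) {x y : X}
    (hne : x ≠ y) (hxy : c.lift (merge d i) x = c.lift (merge d i) y) :
    s(c.block x, c.block y) = s(d, i) := by
  have hle : ∀ j, c.size j ≤ c.size (merge d i j) := fun j => by
    rw [merge_apply]
    split_ifs with hj
    exacts [hj ▸ h, le_rfl]
  have hpos : c.pos x = c.pos y := by
    rw [← c.pos_lift_of_size_le (hle _), hxy, c.pos_lift_of_size_le (hle _)]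
  have hblock : c.block x ≠ c.block y := fun hb => hne (c.eq_of_block_eq_of_pos_eq hb hpos)
  have hmerge := congrArg c.block hxy
  simp only [block_lift, merge_apply] at hmerge
  rw [Sym2.eq_iff]
  grind

lemma exists_size_le_of_mem_mergeTypes {z : Sym2 ℕ} (hz : z ∈ c.mergeTypes) :
    ∃ d i, d ≠ i ∧ c.size d ≤ c.size i ∧ s(c.size d, c.size i) = z := by
  obtain ⟨d, i, hdi, rfl⟩ := hz
  obtain h | h := le_total (c.size d) (c.size i)
  exacts [⟨d, i, hdi, h, rfl⟩, ⟨i, d, hdi.symm, h, Sym2.eq_swap⟩]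

lemma exists_hasMergeType [Finite X] [Finite I] {S : Set (Function.End X)}
    (hS : Submonoid.closure S = c.transformations) {z : Sym2 ℕ} (hz : z ∈ c.mergeTypes) :
    ∃ e ∈ S, c.HasMergeType z e := by
  classical
  obtain ⟨d, i, hdi, hle, rfl⟩ := c.exists_size_le_of_mem_mergeTypes hz
  have hnotinj : ¬Injective (c.lift (merge d i)) := fun hinj => by
    have : c.point d 0 = c.point i 0 := hinj (by
      refine c.eq_of_block_eq_of_pos_eq ?_ ?_ <;>
        simp [merge_apply, pos_lift, pos_point, hdi.symm])
    exact hdi (by simpa using congrArg c.block this)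
  obtain ⟨e, heS, he, v, -, g, hg, hweg⟩ := c.exists_not_injective_factor hS
    (c.mem_transformations_of_semiconj (c.semiconj_lift _)) hnotinj
  refine ⟨e, heS, he, fun x y hne hxy => ?_⟩
  obtain ⟨x, rfl⟩ := g.surjective x
  obtain ⟨y, rfl⟩ := g.surjective y
  have hblocks := c.lift_merge_apply_eq hle (ne_of_apply_ne g hne)
    (by rw [hweg]; exact congrArg v hxy)
  rw [Ne, hg, c.size_block_apply hg, c.size_block_apply hg]
  exact ⟨fun h => hdi (by rw [Sym2.eq_iff] at hblocks; grind),
    congrArg (Sym2.map c.size) hblocks⟩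

lemma injOn_lift_swap [DecidableEq I] {d i j : I} (h : c.size d < c.size i) (hj : j ≠ i) :
    InjOn (c.lift (permEnd (Equiv.swap i d))) {x | c.block x = j} := by
  have hle : c.size j ≤ c.size (permEnd (Equiv.swap i d) j) := by
    rw [permEnd_apply, Equiv.swap_apply_def, if_neg hj]
    split_ifs with hjd
    exacts [hjd ▸ h.le, le_rfl]
  rintro x rfl y (hy : _ = _) hxy
  refine c.eq_of_block_eq_of_pos_eq hy.symm ?_
  rw [← c.pos_lift_of_size_le hle, hxy, c.pos_lift_of_size_le (by rwa [hy])]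

lemma exists_hasShrinkType [Finite X] [Finite I] {S : Set (Function.End X)}
    (hS : Submonoid.closure S = c.transformations) {a : ℕ} (ha : a ∈ c.shrinkTypes) :
    ∃ e ∈ S, c.HasShrinkType a e := by
  classical
  obtain ⟨d, i, hdi, rfl⟩ := ha
  have hblockMap := c.blockMap_eq_of_semiconj (c.semiconj_lift (permEnd (Equiv.swap i d)))
  have hwN : c.lift (permEnd (Equiv.swap i d)) ∉ c.sizePreserving := fun ⟨σ, hσ⟩ => by
    have := congrArg c.size (congrFun ((c.blockMap_eq_of_semiconj hσ).symm.trans hblockMap) i)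
    rw [σ.2, permEnd_apply, Equiv.swap_apply_left] at this
    exact hdi.ne' this
  obtain ⟨e, heS, heN, v, hv, g, -, ⟨σ, hσ⟩, hweg⟩ := exists_factor_notMem c.sizePreserving
    (hS ▸ c.mem_transformations_of_semiconj (c.semiconj_lift _)) hwN
  have he : e ∈ c.transformations := hS ▸ Submonoid.subset_closure heS
  have hinj : Injective (c.blockMap e) := c.injective_blockMap_of_mul (hS ▸ hv) he hσ (by
    rw [← hweg, hblockMap]; exact (Equiv.swap i d).injective)
  have hle : ∀ k, k ≠ i → c.size ((σ : Equiv.Perm I) k) ≤ c.size (c.blockMap e (σ.1 k)) :=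
    fun k hk => by
      rw [σ.2, ← c.ncard_block_fiber k]
      exact c.ncard_le_size_blockMap he hσ (fun _ hx => hx) (hweg ▸ c.injOn_lift_swap hdi hk)
  have hlt : c.size (c.blockMap e (σ.1 i)) < c.size ((σ : Equiv.Perm I) i) := by
    by_contra! hge
    refine heN ⟨⟨Equiv.ofBijective _ (Finite.injective_iff_bijective.1 hinj),
      apply_eq_of_injective_of_le hinj fun j => ?_⟩, c.semiconj_blockMap he⟩
    obtain ⟨k, rfl⟩ := (σ : Equiv.Perm I).surjective j
    obtain rfl | hk := eq_or_ne k i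
    exacts [hge, hle k hk]
  refine ⟨e, heS, hinj, ⟨_, hlt, σ.2 i⟩, ?_⟩
  rintro _ ⟨j, hj, rfl⟩
  obtain ⟨k, rfl⟩ := (σ : Equiv.Perm I).surjective j
  obtain rfl | hk := eq_or_ne k i
  exacts [(σ.2 k).le, absurd hj (hle k hk).not_gt]

lemma semiconj_collapse [DecidableEq X] (i : I) : Semiconj c.block (c.collapse i) id := fun x => by
  rw [collapse, merge_apply]
  split_ifs with hx <;> simp [hx]

lemma not_injective_collapse [DecidableEq X] {i : I} (h : 2 ≤ c.size i) :
    ¬Injective (c.collapse i) := fun hinj => by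
  have hpoints : c.point i (c.size i - 1) ≠ c.point i (c.size i - 2) := fun heq => by
    have := congrArg c.pos heq
    rw [c.pos_point, c.pos_point] at this
    omega
  exact hpoints (hinj ((merge_apply_eq_iff hpoints).2 rfl))

lemma collapse_apply_eq [DecidableEq X] {i : I} {x y : X} (hne : x ≠ y)
    (hxy : c.collapse i x = c.collapse i y) : c.block x = i ∧ c.block y = i := by
  have := congrArg (Sym2.map c.block) ((merge_apply_eq_iff hne).1 hxy)
  simp only [Sym2.map_mk, block_point, Sym2.eq_iff] at this
  grind

lemma exists_hasCollapseType [Finite X] [Finite I] {S : Set (Function.End X)}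
    (hS : Submonoid.closure S = c.transformations) {a : ℕ} (ha : a ∈ c.collapseTypes) :
    ∃ e ∈ S, c.HasCollapseType a e := by
  classical
  obtain ⟨h2, ⟨i, rfl⟩, hgap⟩ := ha
  obtain ⟨e, heS, he, v, hv, g, hg, hweg⟩ := c.exists_not_injective_factor hS
    (c.mem_transformations_of_semiconj (c.semiconj_collapse i)) (c.not_injective_collapse h2)
  have heT : e ∈ c.transformations := hS ▸ Submonoid.subset_closure heS
  obtain ⟨σ, hσ⟩ := c.semiconj_units hg
  have hinj : Injective (c.blockMap e) := c.injective_blockMap_of_mul hv heT hσ (by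
    rw [← hweg, c.blockMap_eq_of_semiconj (c.semiconj_collapse i)]; exact injective_id)
  have hinjOn : InjOn (c.collapse i) {c.point i (c.size i - 1)}ᶜ := injOn_merge _ _
  have hle : ∀ k, c.size ((σ : Equiv.Perm I) k) ≤ c.size (c.blockMap e (σ.1 k)) := fun k => by
    have hcard := c.ncard_le_size_blockMap heT hσ (i := k)
      (A := {x | c.block x = k} \ {c.point i (c.size i - 1)}) (fun _ hx => hx.1)
      (hweg ▸ hinjOn.mono fun _ => And.right)
    rw [σ.2]
    obtain rfl | hk := eq_or_ne k i
    · rw [Set.ncard_sdiff_singleton_of_mem (by simp), c.ncard_block_fiber] at hcard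
      have := hgap (c.blockMap e (σ.1 k))
      omega
    · rwa [Set.sdiff_singleton_eq_self (by simpa using hk.symm), c.ncard_block_fiber] at hcard
  refine ⟨e, heS, he, apply_eq_of_injective_of_le hinj fun j => ?_, fun x y hne hxy => ?_⟩
  · simpa using hle ((σ : Equiv.Perm I).symm j)
  · obtain ⟨x, rfl⟩ := g.surjective x
    obtain ⟨y, rfl⟩ := g.surjective y
    obtain ⟨hx, hy⟩ := c.collapse_apply_eq (ne_of_apply_ne g hne)
      (by rw [hweg]; exact congrArg v hxy)
    rw [hg, c.size_block_apply hg, hx, hy]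
    exact ⟨rfl, rfl⟩

end Types

section RelativeRank

variable {X I : Type*} (c : BlockCoords X I)

/-- The types of the generators which are indispensable besides the units. -/
abbrev GeneratorType := c.mergeTypes ⊕ c.shrinkTypes ⊕ c.collapseTypes

/-- The transformation `e` has the given type. -/
def HasType : c.GeneratorType → Function.End X → Prop
  | .inl z, e => c.HasMergeType z e
  | .inr (.inl a), e => c.HasShrinkType a e
  | .inr (.inr a), e => c.HasCollapseType a e

variable {c}

lemma HasMergeType.not_injective_blockMap {z : Sym2 ℕ} {e : Function.End X}
    (h : c.HasMergeType z e) (he : e ∈ c.transformations) : ¬Injective (c.blockMap e) :=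
  fun hinj => by
    obtain ⟨x, y, hxy, hne⟩ := Function.not_injective_iff.1 h.1
    refine (h.2 x y hne hxy).1 (hinj ?_)
    rw [← c.semiconj_blockMap he, ← c.semiconj_blockMap he, hxy]

lemma HasShrinkType.exists_size_lt {a : ℕ} {e : Function.End X} (h : c.HasShrinkType a e) :
    ∃ i, c.size (c.blockMap e i) < c.size i :=
  h.2.1.imp fun _ => And.left

lemma HasType.eq {τ τ' : c.GeneratorType} {e : Function.End X} (he : e ∈ c.transformations)
    (h : c.HasType τ e) (h' : c.HasType τ' e) : τ = τ' := by
  rcases τ with z | a | a <;> rcases τ' with z' | a' | a' <;> simp only [HasType] at h h'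
  · obtain ⟨x, y, hxy, hne⟩ := Function.not_injective_iff.1 h.1
    exact congrArg _ (Subtype.ext ((h.2 x y hne hxy).2.symm.trans (h'.2 x y hne hxy).2))
  · exact absurd h'.1 (h.not_injective_blockMap he)
  · obtain ⟨x, y, hxy, hne⟩ := Function.not_injective_iff.1 h.1
    exact absurd (h'.2.2 x y hne hxy).1 (h.2 x y hne hxy).1
  · exact absurd h.1 (h'.not_injective_blockMap he)
  · exact congrArg _ (congrArg _ (Subtype.ext (h.2.unique h'.2)))
  · obtain ⟨i, hi⟩ := h.exists_size_lt
    exact absurd (h'.2.1 i) hi.ne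
  · obtain ⟨x, y, hxy, hne⟩ := Function.not_injective_iff.1 h.1
    exact absurd (h.2.2 x y hne hxy).1 (h'.2 x y hne hxy).1
  · obtain ⟨i, hi⟩ := h'.exists_size_lt
    exact absurd (h.2.1 i) hi.ne
  · obtain ⟨x, y, hxy, hne⟩ := Function.not_injective_iff.1 h.1
    exact congrArg _ (congrArg _ (Subtype.ext
      ((h.2.2 x y hne hxy).2.symm.trans (h'.2.2 x y hne hxy).2)))

lemma HasType.notMem_range_permEnd [Finite X] [Finite I] {τ : c.GeneratorType}
    {e : Function.End X} (he : e ∈ c.transformations) (h : c.HasType τ e) :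
    e ∉ range permEnd := by
  rintro ⟨g, rfl⟩
  rcases τ with z | a | a
  · exact h.1 g.injective
  · obtain ⟨i, hi⟩ := HasShrinkType.exists_size_lt h
    have := c.size_block_apply (c.mem_units_of_permEnd_mem he) (c.point i 0)
    rw [block_point] at this
    exact hi.ne this
  · exact h.1 g.injective

variable (c) [Finite I]

lemma exists_consecutive_sizes {a : ℕ} (ha : a ∈ c.shrinkTypes) :
    ∃ i d, c.size i = a ∧ c.size d < a ∧ ∀ j, c.size j < a → c.size j ≤ c.size d := by
  obtain ⟨d, i, hdi, rfl⟩ := ha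
  obtain ⟨d', hd', hmax⟩ := Set.exists_max_image {j | c.size j < c.size i} c.size
    (Set.toFinite _) ⟨d, hdi⟩
  exact ⟨i, d', rfl, hd', hmax⟩

variable [Finite X]

lemma exists_hasType {S : Set (Function.End X)} (hS : Submonoid.closure S = c.transformations) :
    ∀ τ : c.GeneratorType, ∃ e ∈ S, c.HasType τ e
  | .inl z => c.exists_hasMergeType hS z.2
  | .inr (.inl a) => c.exists_hasShrinkType hS a.2
  | .inr (.inr a) => c.exists_hasCollapseType hS a.2

theorem rank_units_add_card_generatorType_le {S : Set (Function.End X)} (hfin : S.Finite)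
    (hS : Submonoid.closure S = c.transformations) :
    Group.rank c.units + Nat.card c.GeneratorType ≤ S.ncard := by
  have hST : ∀ e ∈ S, e ∈ c.transformations := fun e he => hS ▸ Submonoid.subset_closure he
  have hunits : Subgroup.closure (permEnd ⁻¹' S) = c.units := by
    refine le_antisymm ((Subgroup.closure_le _).2 fun g hg =>
      c.mem_units_of_permEnd_mem (hST _ hg)) fun g hg => mem_closure_preimage_permEnd ?_
    exact hS ▸ c.permEnd_mem_transformations hg
  have hrank : Group.rank c.units ≤ (S ∩ range permEnd).ncard := by
    rw [← Set.image_preimage_eq_inter_range, Set.ncard_image_of_injective _ permEnd_injective,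
      ← Nat.card_coe_set_eq, ← Subgroup.rank_congr hunits]
    exact Subgroup.rank_closure_finite_le_nat_card _
  choose e heS he using c.exists_hasType hS
  have hinj : Injective e := fun τ τ' h => (he τ).eq (hST _ (heS τ)) (h ▸ he τ')
  have hcard : Nat.card c.GeneratorType ≤ (S \ range permEnd).ncard := by
    rw [← Nat.card_range_of_injective hinj, Nat.card_coe_set_eq]
    refine Set.ncard_le_ncard ?_ hfin.sdiff
    rintro _ ⟨τ, rfl⟩
    exact ⟨heS τ, (he τ).notMem_range_permEnd (hST _ (heS τ))⟩
  rw [← Set.ncard_inter_add_ncard_sdiff_eq_ncard S (range permEnd) hfin]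
  exact add_le_add hrank hcard

lemma exists_generators_modulo_units :
    ∃ f : c.GeneratorType → Function.End X, (∀ τ, f τ ∈ c.transformations) ∧
      ∀ M : Submonoid (Function.End X), (∀ g ∈ c.units, permEnd g ∈ M) → (∀ τ, f τ ∈ M) →
        c.transformations ≤ M := by
  classical
  choose d₁ i₁ hne hle hz using
    fun z : c.mergeTypes => c.exists_size_le_of_mem_mergeTypes z.2
  choose i₂ d₂ hi₂ hd₂ hmax using fun a : c.shrinkTypes => c.exists_consecutive_sizes a.2
  choose i₃ hi₃ using fun a : c.collapseTypes => a.2.2.1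
  refine ⟨Sum.elim (fun z => c.lift (merge (d₁ z) (i₁ z))) (Sum.elim
    (fun a => c.lift (permEnd (Equiv.swap (i₂ a) (d₂ a)))) fun a => c.collapse (i₃ a)), ?_,
    fun M hG hf => c.transformations_le hG ?_ ?_ ?_⟩
  · rintro (z | a | a)
    exacts [c.mem_transformations_of_semiconj (c.semiconj_lift _),
      c.mem_transformations_of_semiconj (c.semiconj_lift _),
      c.mem_transformations_of_semiconj (c.semiconj_collapse _)]
  · exact fun i h2 hgap => ⟨_, hi₃ ⟨c.size i, h2, ⟨i, rfl⟩, hgap⟩, hf (.inr (.inr _))⟩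
  · intro i d hdi hbetween
    let a : c.shrinkTypes := ⟨c.size i, d, i, hdi, rfl⟩
    have hd : c.size (d₂ a) = c.size d :=
      (hmax a d hdi).antisymm' (not_lt.1 fun h => hbetween _ ⟨h, hd₂ a⟩)
    exact ⟨_, _, hi₂ a, hd, hf (.inr (.inl a))⟩
  · intro i d hdi hsize
    let z : c.mergeTypes := ⟨_, d, i, hdi, rfl⟩
    have hsizes := Sym2.eq_iff.1 (hz z)
    have := hle z
    exact ⟨i₁ z, d₁ z, hne z, by omega, by omega, hf (.inl z)⟩

theorem exists_closure_eq_transformations :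
    ∃ S : Set (Function.End X), S.Finite ∧
      S.ncard ≤ Group.rank c.units + Nat.card c.GeneratorType ∧
      Submonoid.closure S = c.transformations := by
  obtain ⟨f, hfT, hgen⟩ := c.exists_generators_modulo_units
  obtain ⟨U, hUcard, hU⟩ := Group.rank_spec c.units
  let φ : c.units →* Function.End X := permEnd.comp c.units.subtype
  refine ⟨φ '' U ∪ range f, (U.finite_toSet.image φ).union (finite_range f), ?_,
    le_antisymm (Submonoid.closure_le.2 ?_) (hgen _ (fun g hg => ?_) fun τ => ?_)⟩
  · refine (Set.ncard_union_le _ _).trans (add_le_add ?_ ?_)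
    · exact (Set.ncard_image_le U.finite_toSet).trans (by rw [Set.ncard_coe_finset, hUcard])
    · exact Finite.card_range_le f
  · rintro _ (⟨g, -, rfl⟩ | ⟨τ, rfl⟩)
    exacts [c.permEnd_mem_transformations g.2, hfT τ]
  · have hmem : (⟨g, hg⟩ : c.units) ∈ Submonoid.closure (U : Set c.units) := by
      rw [← Subgroup.closure_toSubmonoid_of_finite, hU]
      trivial
    have hφ := Submonoid.mem_map_of_mem φ hmem
    rw [MonoidHom.map_mclosure] at hφ
    exact Submonoid.closure_mono subset_union_left hφ
  · exact Submonoid.subset_closure (.inr (mem_range_self τ))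

theorem setRank_transformations :
    setRank (c.transformations : Set (Function.End X)) =
      Group.rank c.units + Nat.card c.GeneratorType := by
  obtain ⟨S, hfin, hcard, hS⟩ := c.exists_closure_eq_transformations
  have hmem : S.ncard ∈ {k | ∃ S : Set (Function.End X), S.Finite ∧ S.ncard = k ∧
      (Submonoid.closure S : Set (Function.End X)) = c.transformations} :=
    ⟨S, hfin, rfl, by rw [hS]⟩
  refine le_antisymm ((Nat.sInf_le hmem).trans hcard) (le_csInf ⟨_, hmem⟩ ?_)
  rintro _ ⟨S', hfin', rfl, hS'⟩
  exact c.rank_units_add_card_generatorType_le hfin' (SetLike.coe_injective hS')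

theorem rank_units (h : 3 ≤ Nat.card c.units) :
    Group.rank c.units = max 2 (c.bigSizes.ncard + c.repeatedSizes.ncard) := by
  refine le_antisymm ?_ (max_le (c.two_le_rank h) c.ncard_add_ncard_le_rank)
  obtain ⟨S, hfin, hcard, hS⟩ := c.exists_closure_eq_units
  have := hfin.to_subtype
  rw [← Subgroup.rank_congr hS]
  exact (Subgroup.rank_closure_finite_le_nat_card S).trans hcard

end RelativeRank

section CountingTypes

variable {X I : Type*} (c : BlockCoords X I)

lemma mk_mem_mergeTypes_iff {a b : ℕ} :
    s(a, b) ∈ c.mergeTypes ↔ ∃ d i, d ≠ i ∧ c.size d = a ∧ c.size i = b := by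
  constructor
  · rintro ⟨d, i, hdi, h⟩
    obtain ⟨hd, hi⟩ | ⟨hd, hi⟩ := Sym2.eq_iff.1 h
    exacts [⟨d, i, hdi, hd, hi⟩, ⟨i, d, hdi.symm, hi, hd⟩]
  · rintro ⟨d, i, hdi, rfl, rfl⟩
    exact ⟨d, i, hdi, rfl⟩

lemma ncard_mergeTypes [Finite I] :
    c.mergeTypes.ncard = (range c.size).ncard.choose 2 + c.repeatedSizes.ncard := by
  classical
  let E := (finite_range c.size).toFinset
  have hsplit : c.mergeTypes =
      ↑(E.offDiag.image Sym2.mk.uncurry) ∪ Sym2.diag '' c.repeatedSizes := by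
    ext z
    induction z with | _ a b
    rw [mk_mem_mergeTypes_iff]
    obtain rfl | hab := eq_or_ne a b
    · simp [E, repeatedSizes, Sym2.diag]
    · simp only [ne_eq, Finset.coe_image, Finset.coe_offDiag, Finite.coe_toFinset, Sym2.diag,
        mem_union, mem_image, mem_offDiag, mem_range, Prod.exists, uncurry_apply_pair, Sym2.eq,
        Sym2.rel_iff', Prod.mk.injEq, Prod.swap_prod_mk, ↓existsAndEq, true_and, E]
      grind
  have hdisj : Disjoint (↑(E.offDiag.image Sym2.mk.uncurry) : Set (Sym2 ℕ))
      (Sym2.diag '' c.repeatedSizes) := by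
    rw [Set.disjoint_right]
    rintro _ ⟨a, -, rfl⟩
    simp [Sym2.diag]
  rw [hsplit, Set.ncard_union_eq hdisj (Finset.finite_toSet _)
    (((finite_range c.size).subset (by rintro _ ⟨i, -, -, rfl, -⟩; exact ⟨i, rfl⟩)).image _),
    Set.ncard_coe_finset, Sym2.card_image_offDiag,
    Set.ncard_image_of_injective _ Sym2.diag_injective,
    Set.ncard_eq_toFinset_card _ (finite_range c.size)]

lemma ncard_shrinkTypes [Finite I] [Nonempty I] :
    c.shrinkTypes.ncard = (range c.size).ncard - 1 := by
  obtain ⟨d, hd⟩ := Finite.exists_min c.size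
  have : c.shrinkTypes = range c.size \ {c.size d} := by
    ext a
    constructor
    · rintro ⟨j, i, hji, rfl⟩
      exact ⟨⟨i, rfl⟩, ((hd j).trans_lt hji).ne'⟩
    · rintro ⟨⟨i, rfl⟩, hi⟩
      exact ⟨d, i, (hd i).lt_of_ne' hi, rfl⟩
  rw [this, Set.ncard_sdiff_singleton_of_mem (mem_range_self d)]

theorem setRank_transformations_eq [Finite X] [Finite I] [Nonempty I]
    (h : 3 ≤ Nat.card c.units) :
    setRank (c.transformations : Set (Function.End X)) =
      max 2 (c.bigSizes.ncard + c.repeatedSizes.ncard) + (range c.size).ncard.choose 2 +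
        c.repeatedSizes.ncard + ((range c.size).ncard - 1) + c.collapseTypes.ncard := by
  rw [c.setRank_transformations, c.rank_units h, GeneratorType, Nat.card_sum, Nat.card_sum]
  simp only [Nat.card_coe_set_eq, ncard_mergeTypes, ncard_shrinkTypes, add_assoc]

end CountingTypes

end BlockCoords

lemma ncard_setOf_eq_add_ite {P : ℕ → Prop} [Decidable (P 1)] (h0 : ¬P 0)
    (hfin : {a | P a}.Finite) :
    {a | P a}.ncard = {a | 2 ≤ a ∧ P a}.ncard + if P 1 then 1 else 0 := by
  split_ifs with h1
  · rw [← Set.ncard_insert_of_notMem (a := 1) (by simp) (hfin.subset fun _ h => h.2)]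
    congr 1
    ext a
    rcases a with _ | _ | a <;> simp [h0, h1]
  · rw [add_zero]
    congr 1
    ext a
    rcases a with _ | _ | a <;> simp [h0, h1]

lemma choose_two_add_gg (p q t : ℕ) :
    (p + q + gg' t).choose 2 + gg t = (p + q).choose 2 + hh p q t := by
  rcases t with _ | _ | t
  · simp [gg, gg', hh]
  · simp [gg, gg', hh, Nat.choose_succ_succ' (p + q) 1, add_comm]
  · simp only [gg, gg', hh, le_add_iff_nonneg_left, zero_le, ↓reduceIte, Nat.choose_one_right,
      Nat.choose_succ_succ' (p + q) 1, Nat.reduceAdd, Nat.add_eq_zero_iff, one_ne_zero, and_false,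
      and_self, Nat.add_eq_right]
    omega

section Enumeration

variable {X : Type*} {r : Setoid X} {ι κ : Type*} {n : ι → ℕ} {l : κ → ℕ}

lemma setOf_two_le_and_blockCount_ne_zero (hn2 : ∀ i, 2 ≤ n i)
    (hcover : ∀ s, 2 ≤ s → blockCount r s ≠ 0 → (∃ i, s = n i) ∨ (∃ j, s = l j))
    (hl2 : ∀ j, 2 ≤ l j)
    (hcn : ∀ i, blockCount r (n i) ≠ 0) (hcl : ∀ j, blockCount r (l j) ≠ 0) :
    {a | 2 ≤ a ∧ blockCount r a ≠ 0} = range (Sum.elim n l) := by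
  rw [Set.Sum.elim_range]
  ext a
  constructor
  · rintro ⟨h2, ha⟩
    exact (hcover a h2 ha).imp (Exists.imp fun _ => Eq.symm) (Exists.imp fun _ => Eq.symm)
  · rintro (⟨i, rfl⟩ | ⟨j, rfl⟩)
    exacts [⟨hn2 i, hcn i⟩, ⟨hl2 j, hcl j⟩]

lemma setOf_two_le_and_two_le_blockCount (hn2 : ∀ i, 2 ≤ n i)
    (hcover : ∀ s, 2 ≤ s → blockCount r s ≠ 0 → (∃ i, s = n i) ∨ (∃ j, s = l j))
    (hcn : ∀ i, 2 ≤ blockCount r (n i))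
    (hcl : ∀ j, blockCount r (l j) < 2) :
    {a | 2 ≤ a ∧ 2 ≤ blockCount r a} = range n := by
  ext a
  constructor
  · rintro ⟨h2, ha⟩
    obtain ⟨i, rfl⟩ | ⟨j, rfl⟩ := hcover a h2 (two_pos.trans_le ha).ne'
    exacts [mem_range_self i, absurd ha (hcl j).not_ge]
  · rintro ⟨i, rfl⟩
    exact ⟨hn2 i, hcn i⟩

end Enumeration

section OfSetoid

variable {X : Type*} [Finite X] (r : Setoid X)

/-- Coordinates on `X` for the partition into the classes of `r`, obtained by numbering the elements
of each class. -/
noncomputable def blockCoords : BlockCoords X (Quotient r) :=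
  let size (i : Quotient r) : ℕ := Nat.card {x // Quotient.mk r x = i}
  have size_pos (i : Quotient r) : 0 < size i :=
    have : Nonempty {x // Quotient.mk r x = i} := i.exists_rep.elim fun x hx => ⟨⟨x, hx⟩⟩
    Nat.card_pos
  let numbering (i : Quotient r) : {x // Quotient.mk r x = i} ≃ Fin (size i) := Finite.equivFin _
  let point (i : Quotient r) (a : ℕ) : {x // Quotient.mk r x = i} :=
    (numbering i).symm ⟨min a (size i - 1), by have := size_pos i; omega⟩
  { block := Quotient.mk r
    size := size
    pos := fun x => numbering _ ⟨x, rfl⟩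
    point := fun i a => point i a
    block_point := fun i a => (point i a).2
    pos_point := fun i a => by
      have : ∀ x : {x // Quotient.mk r x = i},
          (numbering _ ⟨x, rfl⟩ : ℕ) = numbering i x := by rintro ⟨x, rfl⟩; rfl
      rw [this, Equiv.apply_symm_apply]
    pos_lt := fun x => (numbering _ ⟨x, rfl⟩).2
    point_block_pos := fun x => by
      have := (numbering _ ⟨x, rfl⟩).2
      simp only [point, Nat.min_eq_left (Nat.le_sub_one_of_lt this), Fin.eta,
        Equiv.symm_apply_apply] }

lemma blockCoords_block_eq_iff {x y : X} :
    (blockCoords r).block x = (blockCoords r).block y ↔ r x y := Quotient.eq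

lemma TSet_eq : TSet r = (blockCoords r).transformations := by
  ext f
  simp only [TSet, mem_ofPred_eq, ← blockCoords_block_eq_iff]
  rfl

lemma SXP_eq : SXP r = permEnd '' (blockCoords r).units := by
  ext f
  constructor
  · rintro ⟨hf, h⟩
    refine ⟨Equiv.ofBijective f hf, fun x y => ?_, rfl⟩
    rw [blockCoords_block_eq_iff, blockCoords_block_eq_iff]
    exact h x y
  · rintro ⟨g, hg, rfl⟩
    exact ⟨g.bijective, fun x y => by
      rw [← blockCoords_block_eq_iff, ← blockCoords_block_eq_iff]
      exact hg x y⟩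

lemma ncard_SXP : (SXP r).ncard = Nat.card (blockCoords r).units := by
  rw [SXP_eq, Set.ncard_image_of_injective _ permEnd_injective, ← Nat.card_coe_set_eq]
  rfl

lemma blockCount_eq (a : ℕ) : blockCount r a = {i | (blockCoords r).size i = a}.ncard := by
  have hinj : Injective fun i => {x | (blockCoords r).block x = i} := fun i j h => by
    simpa using h.subset ((blockCoords r).block_point i 0)
  rw [blockCount, ← Set.ncard_image_of_injective _ hinj]
  congr 1
  ext B
  constructor
  · rintro ⟨⟨y, rfl⟩, hB⟩
    have hfiber : {x | (blockCoords r).block x = (blockCoords r).block y} = {x | r x y} :=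
      Set.ext fun x => blockCoords_block_eq_iff r
    exact ⟨_, by rw [mem_ofPred_eq, ← hB, ← hfiber, BlockCoords.ncard_block_fiber], hfiber⟩
  · rintro ⟨i, rfl, rfl⟩
    refine ⟨⟨(blockCoords r).point i 0, Set.ext fun x => ?_⟩, BlockCoords.ncard_block_fiber _ i⟩
    change _ ↔ r _ _
    rw [← blockCoords_block_eq_iff, BlockCoords.block_point, mem_ofPred_eq]

lemma blockCount_ne_zero_iff {a : ℕ} :
    blockCount r a ≠ 0 ↔ ∃ i, (blockCoords r).size i = a := by
  rw [blockCount_eq, ← Nat.pos_iff_ne_zero, Set.ncard_pos]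
  rfl

lemma blockCount_zero : blockCount r 0 = 0 := by
  by_contra h
  obtain ⟨i, hi⟩ := (blockCount_ne_zero_iff r).1 h
  exact ((blockCoords r).size_pos i).ne' hi

lemma two_le_blockCount_iff {a : ℕ} :
    2 ≤ blockCount r a ↔ a ∈ (blockCoords r).repeatedSizes := by
  rw [blockCount_eq, Nat.succ_le_iff, Set.one_lt_ncard]
  constructor
  · rintro ⟨i, hi, j, hj, hij⟩
    exact ⟨i, j, hij, hi, hj⟩
  · rintro ⟨i, j, hij, hi, hj⟩
    exact ⟨i, hi, j, hj, hij⟩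

lemma finite_setOf_blockCount_ne_zero : {a | blockCount r a ≠ 0}.Finite := by
  simp only [blockCount_ne_zero_iff]
  exact finite_range (blockCoords r).size

lemma ncard_setOf_blockCount_ne_zero_pos [Nonempty X] :
    0 < {a | blockCount r a ≠ 0}.ncard := by
  obtain ⟨x⟩ := ‹Nonempty X›
  exact (Set.ncard_pos (finite_setOf_blockCount_ne_zero r)).2
    ⟨_, (blockCount_ne_zero_iff r).2 ⟨(blockCoords r).block x, rfl⟩⟩

lemma ncard_setOf_blockCount_ne_zero :
    {a | blockCount r a ≠ 0}.ncard =
      {a | 2 ≤ a ∧ blockCount r a ≠ 0}.ncard + gg' (blockCount r 1) := by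
  simp only [gg', Nat.one_le_iff_ne_zero]
  exact ncard_setOf_eq_add_ite (not_not.2 (blockCount_zero r)) (finite_setOf_blockCount_ne_zero r)

lemma ncard_setOf_two_le_blockCount :
    {a | 2 ≤ blockCount r a}.ncard =
      {a | 2 ≤ a ∧ 2 ≤ blockCount r a}.ncard + gg (blockCount r 1) :=
  ncard_setOf_eq_add_ite (by simp [blockCount_zero])
    ((finite_setOf_blockCount_ne_zero r).subset fun _ h => (two_pos.trans_le h).ne')

theorem setRank_TSet [Nonempty X] (h : 3 ≤ (SXP r).ncard) :
    setRank (TSet r) =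
      max 2 ({a | 2 ≤ a ∧ blockCount r a ≠ 0}.ncard + {a | 2 ≤ blockCount r a}.ncard) +
        {a | blockCount r a ≠ 0}.ncard.choose 2 + {a | 2 ≤ blockCount r a}.ncard +
        ({a | blockCount r a ≠ 0}.ncard - 1) +
        {a | 2 ≤ a ∧ blockCount r a ≠ 0 ∧ blockCount r (a - 1) = 0}.ncard := by
  have hgap : ∀ a, blockCount r a = 0 ↔ ∀ i, (blockCoords r).size i ≠ a := fun a => by
    rw [← not_iff_not, ← Ne, blockCount_ne_zero_iff]
    push Not
    rfl
  have : Nonempty (Quotient r) := .map (Quotient.mk r) ‹_›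
  rw [TSet_eq, (blockCoords r).setRank_transformations_eq (ncard_SXP r ▸ h)]
  simp only [blockCount_ne_zero_iff, two_le_blockCount_iff, hgap]
  rfl

end OfSetoid

/-- If `|S(X,P)| ≥ 3`, then the rank of `T(X,P)` equals
`max{2, 2p+q+g(t)} + C(p+q,2) + 2p + q + g'(t) − 1 + l + h(p,q,t)`. -/
theorem rank_TXP {X : Type*} [Fintype X] [Nonempty X] (r : Setoid X)
    (p q t : ℕ) (n m : Fin p → ℕ) (l : Fin q → ℕ)
    (hn2 : ∀ i, 2 ≤ n i) (hm2 : ∀ i, 2 ≤ m i) (hl2 : ∀ j, 2 ≤ l j)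
    (hninj : Function.Injective n) (hlinj : Function.Injective l)
    (hnl : ∀ i j, n i ≠ l j)
    (hcn : ∀ i, blockCount r (n i) = m i)
    (hcl : ∀ j, blockCount r (l j) = 1)
    (hct : blockCount r 1 = t)
    (hcover : ∀ s, 2 ≤ s → blockCount r s ≠ 0 → (∃ i, s = n i) ∨ (∃ j, s = l j))
    (hS3 : 3 ≤ (SXP r).ncard) :
    setRank (TSet r) =
      max 2 (2 * p + q + gg t) + (p + q).choose 2 + 2 * p + q + gg' t - 1 +
        {s : ℕ | 2 ≤ s ∧ blockCount r s ≠ 0 ∧ blockCount r (s - 1) = 0}.ncard +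
        hh p q t := by
  have hbig : {a | 2 ≤ a ∧ blockCount r a ≠ 0}.ncard = p + q := by
    rw [setOf_two_le_and_blockCount_ne_zero hn2 hcover hl2
      (fun i => hcn i ▸ (two_pos.trans_le (hm2 i)).ne') fun j => by simp [hcl],
      Set.ncard_range_of_injective (hninj.sumElim hlinj hnl), Nat.card_sum, Nat.card_fin,
      Nat.card_fin]
  have hrep : {a | 2 ≤ a ∧ 2 ≤ blockCount r a}.ncard = p := by
    rw [setOf_two_le_and_two_le_blockCount hn2 hcover (fun i => hcn i ▸ hm2 i) fun j => by
      simp [hcl], Set.ncard_range_of_injective hninj, Nat.card_fin]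
  have hpos := ncard_setOf_blockCount_ne_zero_pos r
  have hchoose := choose_two_add_gg p q t
  rw [ncard_setOf_blockCount_ne_zero, hbig, hct] at hpos
  rw [setRank_TSet r hS3, ncard_setOf_two_le_blockCount, ncard_setOf_blockCount_ne_zero, hbig, hrep,
    hct, show p + q + (p + gg t) = 2 * p + q + gg t by ring]
  omega
end

section
/- If |X| ≥ 3 and all blocks of the partition P have the same size, then the group S(X,P) is generated by two elements. -/
open Function Set

/-- The group `S(X,P)` of permutations of `X` preserving the partition induced by
the equivalence relation `r`, as a subgroup of `Equiv.Perm X`. -/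
def SGrp {X : Type*} (r : Setoid X) : Subgroup (Equiv.Perm X) where
  carrier := {g | ∀ x y : X, r (g x) (g y) ↔ r x y}
  one_mem' := by intro x y; simp
  mul_mem' := by
    intro a b ha hb x y
    simp only [Equiv.Perm.mul_apply]
    rw [ha, hb]
  inv_mem' := by
    intro a ha x y
    have h := ha (a⁻¹ x) (a⁻¹ y)
    simpa using h.symm

/-
Choose coordinates `X ≃ A × Y` in which the blocks are the fibres over `A`. Then `S(X,P)` is the
wreath product of `Perm Y` and `Perm A`, and it is generated by the block permutations together with
generators of `Perm Y` acting on single fibres. `Perm Y` is generated by some `v` with `v ^ 2 = 1`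
and some `w` of odd order.

With at least three blocks, let `σ` be the cyclic rotation of the blocks and take `a = v₀ σ` and
`b = (0 1) w₂`, subscripts naming the fibre acted on. The factors of `b` commute and have coprime
orders, so both are powers of `b`. Conjugation by `a` carries `(i i+1)` to `(i+1 i+2)`, since the
latter fixes the block `0` and hence commutes with `v₀`. This yields all block permutations, and
then `v₀ = a σ⁻¹`. With two blocks, `a = v₀ w₁` and `b = (0 1)` generate, because the commuting
factors of `a` have coprime orders.
-/

section Group

variable {G : Type*} [Group G] {H : Subgroup G} {x y : G}

theorem mem_and_mem_of_mul_mem_of_coprime (h : Commute x y)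
    (hxy : (orderOf x).Coprime (orderOf y)) (hmem : x * y ∈ H) : x ∈ H ∧ y ∈ H := by
  obtain ⟨k, hk⟩ := exists_pow_eq_self_of_coprime hxy.symm
  have hpow : (x * y) ^ orderOf y = x ^ orderOf y := by
    rw [h.mul_pow, pow_orderOf_eq_one, mul_one]
  have hx : x ∈ H := by
    rw [← hk, ← hpow]
    exact H.pow_mem (H.pow_mem hmem _) _
  exact ⟨hx, (H.mul_mem_cancel_left hx).1 hmem⟩

theorem mem_of_semiconjBy {a : G} (h : SemiconjBy a x y) (ha : a ∈ H) (hx : x ∈ H) : y ∈ H :=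
  (H.mul_mem_cancel_right ha).1 (h.eq ▸ H.mul_mem ha hx)

theorem closure_pair_mul_right (x y : G) :
    Subgroup.closure {x, x * y} = Subgroup.closure {x, y} := by
  refine le_antisymm ((Subgroup.closure_le _).2 ?_) ((Subgroup.closure_le _).2 ?_)
  · have hx : x ∈ Subgroup.closure {x, y} := Subgroup.mem_closure_of_mem (mem_insert _ _)
    have hy : y ∈ Subgroup.closure {x, y} := Subgroup.mem_closure_of_mem (mem_insert_of_mem _ rfl)
    exact Set.pair_subset hx (mul_mem hx hy)
  · have hx : x ∈ Subgroup.closure {x, x * y} := Subgroup.mem_closure_of_mem (mem_insert _ _)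
    have hxy : x * y ∈ Subgroup.closure {x, x * y} :=
      Subgroup.mem_closure_of_mem (mem_insert_of_mem _ rfl)
    exact Set.pair_subset hx ((Subgroup.mul_mem_cancel_left _ hx).1 hxy)

end Group

section SymmetricGroup

open Equiv Equiv.Perm

theorem exists_isCycle_support_eq_univ (α : Type*) [Fintype α] [DecidableEq α] [Nontrivial α] :
    ∃ σ : Perm α, σ.IsCycle ∧ σ.support = Finset.univ := by
  obtain ⟨σ, hσ, -⟩ := (Set.countable_univ (α := α)).exists_cycleOn
  refine ⟨σ, isCycle_iff_exists_isCycleOn.2 ⟨univ, nontrivial_univ, hσ, fun _ _ ↦ mem_univ _⟩, ?_⟩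
  exact Finset.eq_univ_of_forall fun x ↦ mem_support.2 (hσ.apply_ne nontrivial_univ (mem_univ x))

theorem odd_orderOf_swap_mul_of_even_orderOf {α : Type*} [Finite α] [DecidableEq α] {σ : Perm α}
    (hσ : σ.IsCycle) {x : α} (hx : σ x ≠ x) (heven : Even (orderOf σ)) :
    Odd (orderOf (swap x (σ x) * σ)) := by
  cases nonempty_fintype α
  by_cases hx' : σ (σ x) = x
  · have h := hσ.eq_swap_of_apply_apply_eq_self hx hx'
    have hone : swap x (σ x) * σ = 1 := by
      nth_rw 2 [h]
      exact swap_mul_self _ _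
    simp [hone]
  · rw [hσ.orderOf] at heven
    rw [(hσ.swap_mul hx hx').orderOf, support_swap_mul_eq _ _ hx',
      Finset.card_sdiff_of_subset (by simpa using hx), Finset.card_singleton]
    exact Nat.Even.sub_odd (Finset.card_pos.2 ⟨x, mem_support.2 hx⟩) heven odd_one

theorem exists_orderOf_dvd_two_odd_orderOf_closure_eq_top (α : Type*) [Finite α] :
    ∃ v w : Perm α, orderOf v ∣ 2 ∧ Odd (orderOf w) ∧ Subgroup.closure {v, w} = ⊤ := by
  classical
  cases nonempty_fintype α
  rcases subsingleton_or_nontrivial α with _ | _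
  · exact ⟨1, 1, by simp, by simp, Subsingleton.elim _ _⟩
  obtain ⟨σ, hσ, hsupp⟩ := exists_isCycle_support_eq_univ α
  obtain ⟨x, hx⟩ : ∃ x, σ x ≠ x := hσ.imp fun _ ↦ And.left
  have hswap : orderOf (swap x (σ x)) ∣ 2 := orderOf_dvd_of_pow_eq_one (by simp [sq])
  have hgen : Subgroup.closure {swap x (σ x), σ} = ⊤ := by
    rw [Set.pair_comm, closure_cycle_adjacent_swap hσ hsupp]
  rcases Nat.even_or_odd (orderOf σ) with heven | hodd
  · refine ⟨_, swap x (σ x) * σ, hswap, odd_orderOf_swap_mul_of_even_orderOf hσ hx heven, ?_⟩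
    rw [closure_pair_mul_right, hgen]
  · exact ⟨_, σ, hswap, hodd, hgen⟩

end SymmetricGroup

section Wreath

open Equiv

/-- The imprimitive wreath product of `Perm Y` and `Perm A`: the group `S(A × Y, P)` for the
partition `P` of `A × Y` into the fibres `{i} × Y`. -/
abbrev wreath (A Y : Type*) : Subgroup (Perm (A × Y)) :=
  SGrp (Setoid.ker Prod.fst)

/-- The action of `Perm A` on `A × Y` through the first coordinate, permuting the blocks. -/
def permBlocks (A Y : Type*) : Perm A →* Perm (A × Y) where
  toFun σ := prodCongr σ (Equiv.refl Y)
  map_one' := rfl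
  map_mul' _ _ := rfl

/-- The base group of the wreath product: `f i` acts on the block `{i} × Y`, for every `i`. -/
def permFibers (A Y : Type*) : (A → Perm Y) →* Perm (A × Y) where
  toFun f := prodShear (Equiv.refl A) f
  map_one' := rfl
  map_mul' _ _ := rfl

/-- The factor of the base group acting on the block `{i} × Y` and fixing every other block
pointwise. -/
def permFiber {A : Type*} (Y : Type*) [DecidableEq A] (i : A) : Perm Y →* Perm (A × Y) :=
  (permFibers A Y).comp (MonoidHom.mulSingle (fun _ ↦ Perm Y) i)

variable {A Y : Type*}

@[simp]
theorem permBlocks_apply (σ : Perm A) (x : A × Y) : permBlocks A Y σ x = (σ x.1, x.2) :=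
  rfl

@[simp]
theorem permFibers_apply (f : A → Perm Y) (x : A × Y) : permFibers A Y f x = (x.1, f x.1 x.2) :=
  rfl

theorem permBlocks_mem_wreath (σ : Perm A) : permBlocks A Y σ ∈ wreath A Y :=
  fun _ _ ↦ σ.injective.eq_iff

theorem permFibers_mem_wreath (f : A → Perm Y) : permFibers A Y f ∈ wreath A Y :=
  fun _ _ ↦ Iff.rfl

theorem exists_perm_fst_apply_eq [Nonempty Y] {g : Perm (A × Y)} (hg : g ∈ wreath A Y) :
    ∃ σ : Perm A, ∀ x, (g x).1 = σ x.1 := by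
  obtain ⟨y₀⟩ := ‹Nonempty Y›
  have fst_eq {g : Perm (A × Y)} (hg : g ∈ wreath A Y) (x : A × Y) : (g x).1 = (g (x.1, y₀)).1 :=
    (hg x (x.1, y₀)).2 rfl
  have hsymm : g.symm ∈ wreath A Y := inv_mem hg
  refine ⟨⟨fun i ↦ (g (i, y₀)).1, fun i ↦ (g.symm (i, y₀)).1, fun i ↦ ?_, fun i ↦ ?_⟩, fst_eq hg⟩
  · dsimp only
    rw [← fst_eq hsymm, symm_apply_apply]
  · dsimp only
    rw [← fst_eq hg, apply_symm_apply]

theorem exists_permFibers_eq {g : Perm (A × Y)} (hg : ∀ x, (g x).1 = x.1) :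
    ∃ f, permFibers A Y f = g := by
  have hsymm (x : A × Y) : (g.symm x).1 = x.1 := by
    rw [← hg, apply_symm_apply]
  have mk_apply {g : Perm (A × Y)} (hg : ∀ x, (g x).1 = x.1) (i : A) (y : Y) :
      (i, (g (i, y)).2) = g (i, y) :=
    Prod.ext (hg (i, y)).symm rfl
  refine ⟨fun i ↦ ⟨fun y ↦ (g (i, y)).2, fun y ↦ (g.symm (i, y)).2, fun y ↦ ?_, fun y ↦ ?_⟩, ?_⟩
  · dsimp only
    rw [mk_apply hg, symm_apply_apply]
  · dsimp only
    rw [mk_apply hsymm, apply_symm_apply]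
  · exact Equiv.ext fun x ↦ mk_apply hg x.1 x.2

theorem exists_permBlocks_mul_permFibers_eq {g : Perm (A × Y)} (hg : g ∈ wreath A Y) :
    ∃ σ f, permBlocks A Y σ * permFibers A Y f = g := by
  rcases isEmpty_or_nonempty Y with _ | _
  · exact ⟨1, 1, Subsingleton.elim _ _⟩
  obtain ⟨σ, hσ⟩ := exists_perm_fst_apply_eq hg
  obtain ⟨f, hf⟩ := exists_permFibers_eq (g := permBlocks A Y σ⁻¹ * g) fun x ↦
    (σ.symm_apply_eq).2 (hσ x)
  exact ⟨σ, f, by rw [hf, ← mul_assoc, ← map_mul, mul_inv_cancel, map_one, one_mul]⟩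

variable [DecidableEq A]

theorem permFiber_mem_wreath (i : A) (α : Perm Y) : permFiber Y i α ∈ wreath A Y :=
  permFibers_mem_wreath _

theorem semiconjBy_permBlocks_permFiber (σ : Perm A) (i : A) (α : Perm Y) :
    SemiconjBy (permBlocks A Y σ) (permFiber Y i α) (permFiber Y (σ i) α) := by
  ext x
  · rfl
  · rcases eq_or_ne x.1 i with rfl | h
    · simp [permFiber]
    · simp [permFiber, h]

theorem commute_permBlocks_permFiber {σ : Perm A} {i : A} (hi : σ i = i) (α : Perm Y) :
    Commute (permBlocks A Y σ) (permFiber Y i α) := by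
  have h := semiconjBy_permBlocks_permFiber σ i α
  rwa [hi] at h

theorem commute_permFiber {i j : A} (hij : i ≠ j) (α β : Perm Y) :
    Commute (permFiber Y i α) (permFiber Y j β) :=
  (Pi.mulSingle_commute (f := fun _ ↦ Perm Y) hij α β).map (permFibers A Y)

theorem wreath_le_of_permFiber_mem [Finite A] {H : Subgroup (Perm (A × Y))} {S : Set (Perm Y)}
    (hS : Subgroup.closure S = ⊤) (hblocks : ∀ σ, permBlocks A Y σ ∈ H)
    (hfiber : ∀ α ∈ S, ∃ i, permFiber Y i α ∈ H) : wreath A Y ≤ H := by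
  have hgen (j : A) : S ⊆ H.comap (permFiber Y j) := by
    intro α hα
    obtain ⟨i, hi⟩ := hfiber α hα
    have h := semiconjBy_permBlocks_permFiber (swap i j) i α
    rw [swap_apply_left] at h
    exact Subgroup.mem_comap.2 (mem_of_semiconjBy h (hblocks _) hi)
  have hfibers (f : A → Perm Y) : permFibers A Y f ∈ H := by
    refine Subgroup.pi_mem_of_mulSingle_mem (H := H.comap (permFibers A Y)) f fun j ↦ ?_
    exact (Subgroup.closure_le _).2 (hgen j) (hS ▸ Subgroup.mem_top (f j))
  intro g hg
  obtain ⟨σ, f, rfl⟩ := exists_permBlocks_mul_permFibers_eq hg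
  exact H.mul_mem (hblocks σ) (hfibers f)

theorem closure_pair_eq_wreath [Finite A] {a b : Perm (A × Y)} {v w : Perm Y} {i j : A}
    (hvw : Subgroup.closure {v, w} = ⊤) (ha : a ∈ wreath A Y) (hb : b ∈ wreath A Y)
    (hblocks : ∀ σ, permBlocks A Y σ ∈ Subgroup.closure {a, b})
    (hv : permFiber Y i v ∈ Subgroup.closure {a, b})
    (hw : permFiber Y j w ∈ Subgroup.closure {a, b}) :
    Subgroup.closure {a, b} = wreath A Y := by
  refine le_antisymm ((Subgroup.closure_le _).2 (Set.pair_subset ha hb)) ?_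
  refine wreath_le_of_permFiber_mem hvw hblocks ?_
  rintro α (rfl | rfl)
  exacts [⟨i, hv⟩, ⟨j, hw⟩]

end Wreath

section Generators

open Equiv

variable {Y : Type*} {v w : Perm Y}

theorem closure_pair_eq_wreath_fin_one (hvw : Subgroup.closure {v, w} = ⊤) :
    Subgroup.closure {permFiber Y 0 v, permFiber Y 0 w} = wreath (Fin 1) Y := by
  refine closure_pair_eq_wreath hvw (permFiber_mem_wreath 0 v) (permFiber_mem_wreath 0 w)
    (fun σ ↦ ?_) (Subgroup.mem_closure_of_mem (mem_insert _ _))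
    (Subgroup.mem_closure_of_mem (mem_insert_of_mem _ rfl))
  rw [Subsingleton.elim σ 1, map_one]
  exact one_mem _

theorem closure_pair_eq_wreath_fin_two (hvw : Subgroup.closure {v, w} = ⊤)
    (hcop : (orderOf v).Coprime (orderOf w)) :
    Subgroup.closure {permFiber Y 0 v * permFiber Y 1 w, permBlocks (Fin 2) Y (swap 0 1)} =
      wreath (Fin 2) Y := by
  set a := permFiber Y (0 : Fin 2) v * permFiber Y 1 w
  set b := permBlocks (Fin 2) Y (swap 0 1)
  have ha : a ∈ Subgroup.closure {a, b} := Subgroup.mem_closure_of_mem (mem_insert _ _)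
  have hb : b ∈ Subgroup.closure {a, b} := Subgroup.mem_closure_of_mem (mem_insert_of_mem _ rfl)
  obtain ⟨hv, hw⟩ := mem_and_mem_of_mul_mem_of_coprime (commute_permFiber Fin.zero_ne_one v w)
    (hcop.of_dvd (orderOf_map_dvd _ v) (orderOf_map_dvd _ w)) ha
  refine closure_pair_eq_wreath hvw
    (mul_mem (permFiber_mem_wreath 0 v) (permFiber_mem_wreath 1 w))
    (permBlocks_mem_wreath (swap 0 1)) (fun σ ↦ ?_) hv hw
  obtain rfl | rfl : σ = 1 ∨ σ = swap 0 1 := by decide +revert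
  · rw [map_one]
    exact one_mem _
  · exact hb

theorem semiconjBy_finRotate_swap_castSucc_succ {n : ℕ} (i : Fin n) :
    SemiconjBy (finRotate (n + 2)) (swap i.castSucc.castSucc i.castSucc.succ)
      (swap i.succ.castSucc i.succ.succ) := by
  rw [SemiconjBy, mul_swap_eq_swap_mul, finRotate_apply, finRotate_apply, Fin.coeSucc_eq_succ,
    ← Fin.castSucc_succ, Fin.coeSucc_eq_succ]

theorem semiconjBy_permFiber_mul_permBlocks {A : Type*} [DecidableEq A] {σ τ τ' : Perm A} {i : A}
    (h : SemiconjBy σ τ τ') (hi : τ' i = i) (v : Perm Y) :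
    SemiconjBy (permFiber Y i v * permBlocks A Y σ) (permBlocks A Y τ) (permBlocks A Y τ') :=
  (commute_permBlocks_permFiber hi v).symm.semiconjBy.mul_left (h.map (permBlocks A Y))

theorem permBlocks_mem_of_permFiber_mul_finRotate_mem {n : ℕ}
    {H : Subgroup (Perm (Fin (n + 2) × Y))}
    (hrot : permFiber Y 0 v * permBlocks _ Y (finRotate (n + 2)) ∈ H)
    (hswap : permBlocks _ Y (swap 0 1) ∈ H) (σ : Perm (Fin (n + 2))) : permBlocks _ Y σ ∈ H := by
  have hadj (i : Fin (n + 1)) : permBlocks _ Y (swap i.castSucc i.succ) ∈ H := by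
    induction i using Fin.induction with
    | zero => exact hswap
    | succ i ih =>
      have hfix : swap i.succ.castSucc i.succ.succ 0 = 0 :=
        swap_apply_of_ne_of_ne (by simp [Fin.ext_iff]) (by simp [Fin.ext_iff])
      have hrot_swap :=
        semiconjBy_permFiber_mul_permBlocks (semiconjBy_finRotate_swap_castSucc_succ i) hfix v
      exact mem_of_semiconjBy hrot_swap hrot ih
  have hle : Submonoid.closure (range fun i : Fin (n + 1) ↦ swap i.castSucc i.succ) ≤
      (H.comap (permBlocks _ Y)).toSubmonoid :=
    Submonoid.closure_le.2 (range_subset_iff.2 hadj)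
  rw [Perm.mclosure_swap_castSucc_succ] at hle
  exact hle (Submonoid.mem_top σ)

theorem closure_pair_eq_wreath_fin_add_three (m : ℕ) (hvw : Subgroup.closure {v, w} = ⊤)
    (hw : Odd (orderOf w)) :
    Subgroup.closure {permFiber Y 0 v * permBlocks _ Y (finRotate (m + 3)),
      permBlocks _ Y (swap 0 1) * permFiber Y 2 w} = wreath (Fin (m + 3)) Y := by
  set a := permFiber Y 0 v * permBlocks _ Y (finRotate (m + 3))
  set b := permBlocks _ Y (swap (0 : Fin (m + 3)) 1) * permFiber Y 2 w
  have ha : a ∈ Subgroup.closure {a, b} := Subgroup.mem_closure_of_mem (mem_insert _ _)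
  have hb : b ∈ Subgroup.closure {a, b} := Subgroup.mem_closure_of_mem (mem_insert_of_mem _ rfl)
  have hfix : swap (0 : Fin (m + 3)) 1 2 = 2 :=
    swap_apply_of_ne_of_ne (Fin.ne_of_val_ne (by rw [Fin.val_two]; exact two_ne_zero))
      (Fin.ne_of_val_ne (by rw [Fin.val_two]; exact Nat.succ_ne_self 1))
  have hswap_order : orderOf (permBlocks _ Y (swap (0 : Fin (m + 3)) 1)) ∣ 2 :=
    orderOf_dvd_of_pow_eq_one (by rw [← map_pow, sq, swap_mul_self, map_one])
  have hcop := (Nat.coprime_two_left.2 hw).of_dvd hswap_order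
    (orderOf_map_dvd (permFiber Y (2 : Fin (m + 3))) w)
  obtain ⟨hswap, hw'⟩ :=
    mem_and_mem_of_mul_mem_of_coprime (commute_permBlocks_permFiber hfix w) hcop hb
  have hblocks := permBlocks_mem_of_permFiber_mul_finRotate_mem ha hswap
  exact closure_pair_eq_wreath hvw
    (mul_mem (permFiber_mem_wreath _ _) (permBlocks_mem_wreath _))
    (mul_mem (permBlocks_mem_wreath _) (permFiber_mem_wreath _ _)) hblocks
    ((Subgroup.mul_mem_cancel_right _ (hblocks _)).1 ha) hw'

theorem exists_closure_pair_eq_wreath (m : ℕ) (Y : Type*) [Finite Y] :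
    ∃ a b, Subgroup.closure {a, b} = wreath (Fin m) Y := by
  obtain ⟨v, w, hv, hw, hvw⟩ := exists_orderOf_dvd_two_odd_orderOf_closure_eq_top Y
  match m with
  | 0 => exact ⟨1, 1, Subsingleton.elim _ _⟩
  | 1 => exact ⟨_, _, closure_pair_eq_wreath_fin_one hvw⟩
  | 2 =>
    exact ⟨_, _, closure_pair_eq_wreath_fin_two hvw
      ((Nat.coprime_two_left.2 hw).coprime_dvd_left hv)⟩
  | m + 3 => exact ⟨_, _, closure_pair_eq_wreath_fin_add_three m hvw hw⟩

end Generators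

section Coordinates

variable {X A Y Z : Type*}

theorem SGrp_comap_equiv (s : Setoid Z) (e : X ≃ Z) :
    SGrp (s.comap e) = (SGrp s).map e.symm.permCongrHom.toMonoidHom := by
  ext g
  rw [Subgroup.mem_map_equiv]
  change (∀ x y, s (e (g x)) (e (g y)) ↔ s (e x) (e y)) ↔
    ∀ x y, s (e (g (e.symm x))) (e (g (e.symm y))) ↔ s x y
  rw [e.forall_congr_left]
  simp [e.forall_congr_left]

theorem exists_equiv_prod_of_equiv_fiber (f : X → A) (h : ∀ a, Nonempty ({x // f x = a} ≃ Y)) :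
    ∃ e : X ≃ A × Y, ∀ x, (e x).1 = f x :=
  ⟨(Equiv.sigmaFiberEquiv f).symm.trans
    ((Equiv.sigmaCongrRight fun a ↦ (h a).some).trans (Equiv.sigmaEquivProd A Y)), fun _ ↦ rfl⟩

theorem card_fiber_mk_eq_of_ncard_classes_eq {r : Setoid X} {c : ℕ}
    (h : ∀ B ∈ Setoid.classes r, B.ncard = c) (z : Quotient r) :
    Nat.card {x // Quotient.mk r x = z} = c := by
  induction z using Quotient.inductionOn with
  | h y =>
    rw [← h _ (r.mem_classes y), ← Nat.card_coe_set_eq]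
    exact Nat.card_congr (Equiv.subtypeEquivRight fun x ↦ Quotient.eq)

theorem exists_equiv_fin_prod_of_ncard_classes_eq [Finite X] (r : Setoid X) (c : ℕ)
    (h : ∀ B ∈ Setoid.classes r, B.ncard = c) :
    ∃ (m : ℕ) (e : X ≃ Fin m × Fin c), r = (Setoid.ker Prod.fst).comap e := by
  obtain ⟨m, ⟨q⟩⟩ := Finite.exists_equiv_fin (Quotient r)
  obtain ⟨e, he⟩ := exists_equiv_prod_of_equiv_fiber (Quotient.mk r) fun z ↦
    ⟨Finite.equivFinOfCardEq (card_fiber_mk_eq_of_ncard_classes_eq h z)⟩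
  refine ⟨m, e.trans (Equiv.prodCongrLeft fun _ ↦ q), Setoid.ext fun x y ↦ ?_⟩
  simp [Setoid.ker_def, he, Quotient.eq]

end Coordinates

/-- If `|X| ≥ 3` and all blocks of the partition have the same
size, then the group `S(X,P)` is generated by two elements. -/
theorem SXP_two_generated {X : Type*} [Fintype X] (r : Setoid X)
    (hX : 3 ≤ Fintype.card X)
    (huniform : ∃ c : ℕ, ∀ B ∈ Setoid.classes r, B.ncard = c) :
    ∃ a b : Equiv.Perm X, Subgroup.closure {a, b} = SGrp r := by
  obtain ⟨c, hc⟩ := huniform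
  obtain ⟨m, e, rfl⟩ := exists_equiv_fin_prod_of_ncard_classes_eq r c hc
  obtain ⟨a, b, hab⟩ := exists_closure_pair_eq_wreath m (Fin c)
  refine ⟨e.symm.permCongrHom a, e.symm.permCongrHom b, ?_⟩
  rw [SGrp_comap_equiv _ e, ← wreath, ← hab, MonoidHom.map_closure, Set.image_pair]
  rfl
end
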